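/- Let Ω be a non-convex quadrilateral with reflex interior angle β ∈ (π, 2π), and let d(x) = dist(x, ∂Ω). Then for every u ∈ C_c^∞(Ω) one has ∫_Ω |∇u(x)|² dx ≥ c_β ∫_Ω u(x)²/d(x)² dx. -/

import Mathlib

open Real MeasureTheory Set

noncomputable abbrev E2 := EuclideanSpace ℝ (Fin 2)

/-- `c` solves the Hardy-constant equation for the angle `β`. -/
def hardyEq (c β : ℝ) : Prop :=
  Real.sqrt c * Real.tan (Real.sqrt c * ((β - Real.pi) / 2)) =
    2 * (Real.Gamma ((3 + Real.sqrt (1 - 4 * c)) / 4) /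
         Real.Gamma ((1 + Real.sqrt (1 - 4 * c)) / 4)) ^ 2

/-- `βcr` is the critical angle: the unique angle in `(π, 2π)` with
`tan((βcr − π)/4) = 4 (Γ(3/4)/Γ(1/4))²`. -/
def isBetaCr (βcr : ℝ) : Prop :=
  βcr ∈ Set.Ioo Real.pi (2 * Real.pi) ∧
    Real.tan ((βcr - Real.pi) / 4) = 4 * (Real.Gamma (3 / 4) / Real.Gamma (1 / 4)) ^ 2

/-- `c = c_β`: for `β ≤ βcr`, `c = 1/4`; for `β > βcr`, `c` is the unique solution in
`(0, 1/4]` of the Hardy-constant equation for `β`. -/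
def isHardyConst (βcr β c : ℝ) : Prop :=
  (β ≤ βcr ∧ c = 1 / 4) ∨ (βcr < β ∧ c ∈ Set.Ioc (0 : ℝ) (1 / 4) ∧ hardyEq c β)

/-- The closed convex wedge with vertex `v` spanned by the directions towards `a` and `b`. -/
def wedge (v a b : E2) : Set E2 :=
  {p | ∃ s t : ℝ, 0 ≤ s ∧ 0 ≤ t ∧ p = v + s • (a - v) + t • (b - v)}

/-- `Ω` is a non-convex quadrilateral with reflex interior angle `β ∈ (π, 2π)`:
a bounded nonempty open set whose boundary is a simple closed polygon with four
vertices `v 0, v 1, v 2, v 3`, exactly one of whose interior angles equals `β` and is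
reflex (near the reflex vertex `Ω` coincides with the complement of the wedge of the two
adjacent edges, so the interior angle there is `2π` minus the unsigned angle between the
edges), while at every other vertex `Ω` coincides locally with the interior of the wedge
(a convex vertex, with interior angle `< π`). -/
def IsNonconvexQuadrilateral (Ω : Set E2) (β : ℝ) : Prop :=
  IsOpen Ω ∧ Bornology.IsBounded Ω ∧ Ω.Nonempty ∧
  Real.pi < β ∧ β < 2 * Real.pi ∧
  ∃ v : Fin 4 → E2, Function.Injective v ∧
    frontier Ω = ⋃ i, segment ℝ (v i) (v (i + 1)) ∧
    (∀ i, segment ℝ (v i) (v (i + 1)) ∩ segment ℝ (v (i + 1)) (v (i + 2)) = {v (i + 1)}) ∧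
    (∀ i, segment ℝ (v i) (v (i + 1)) ∩ segment ℝ (v (i + 2)) (v (i + 3)) = ∅) ∧
    ∃ i₀ : Fin 4,
      (EuclideanGeometry.angle (v (i₀ - 1)) (v i₀) (v (i₀ + 1)) = 2 * Real.pi - β ∧
        ∃ ε > 0, Metric.ball (v i₀) ε ∩ Ω =
          Metric.ball (v i₀) ε \ wedge (v i₀) (v (i₀ - 1)) (v (i₀ + 1))) ∧
      ∀ i ≠ i₀, EuclideanGeometry.angle (v (i - 1)) (v i) (v (i + 1)) < Real.pi ∧
        ∃ ε > 0, Metric.ball (v i) ε ∩ Ω =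
          Metric.ball (v i) ε ∩ interior (wedge (v i) (v (i - 1)) (v (i + 1)))

/-!
A vector field `F` with `c / d² ≤ -div F - |F|²` yields the Hardy inequality with weight `c / d²`:
expand `0 ≤ |∇v - v F|²` and integrate `2 v ∇v · F` by parts. Where the nearest side ends at the
reflex vertex, `F` is homogeneous of degree `-1` about that vertex and its angular part solves a
Riccati equation, whose solution in terms of `∫ (cosh t + x) ^ (-a) dt` brings the Gamma functions
into the Hardy constant. Where the nearest side is one of the other two, at distance `d`, `F` is
`α ∇d / d` with `c ≤ α (1 - α)`. Where the nearest side changes, the jump of `F` has the favorable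
sign, so the fields can be glued by soft-min weights whose inverse temperature tends to infinity.
-/

namespace NonconvexQuadrilateral

section CoshIntegral

/-- The integral `∫ (cosh t + x) ^ (-a) dt`, meaningful for `0 < a` and `-1 < x`. As a function of
`x = sin θ` it solves the hypergeometric equation behind the Hardy constant `c = a * (1 - a)` of a
sector. -/
noncomputable def coshIntegral (a x : ℝ) : ℝ := ∫ t : ℝ, (cosh t + x) ^ (-a)

variable {a x : ℝ}

lemma integrable_exp_neg_mul_abs (ha : 0 < a) : Integrable fun t : ℝ => exp (-(a * |t|)) := by
  have hpos : IntegrableOn (fun t : ℝ => exp (-(a * |t|))) (Ioi 0) := by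
    refine (integrableOn_exp_mul_Ioi (neg_lt_zero.2 ha) 0).congr_fun (fun t ht => ?_)
      measurableSet_Ioi
    simp only [abs_of_pos (mem_Ioi.1 ht), neg_mul]
  have hneg : IntegrableOn (fun t : ℝ => exp (-(a * |t|))) (Iic 0) := by
    refine (integrableOn_exp_mul_Iic ha 0).congr_fun (fun t ht => ?_) measurableSet_Iic
    simp only [abs_of_nonpos (mem_Iic.1 ht), mul_neg, neg_neg]
  simpa only [Iic_union_Ioi, integrableOn_univ] using hneg.union hpos

lemma mul_cosh_le_cosh_add {r : ℝ} (hr : 0 ≤ r) (hx : -r ≤ x) (t : ℝ) :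
    (1 - r) * cosh t ≤ cosh t + x := by
  nlinarith [one_le_cosh t]

lemma cosh_add_pos (hx : -1 < x) (t : ℝ) : 0 < cosh t + x := by
  linarith [one_le_cosh t]

lemma cosh_add_rpow_neg_le {r : ℝ} (ha : 0 < a) (hr : 0 ≤ r) (hr1 : r < 1) (hx : -r ≤ x)
    (t : ℝ) : (cosh t + x) ^ (-a) ≤ ((1 - r) / 2) ^ (-a) * exp (-(a * |t|)) := by
  have hbase : (1 - r) / 2 * exp |t| ≤ cosh t + x := by
    have hexp : exp |t| / 2 ≤ cosh t := by
      rw [← cosh_abs, cosh_eq]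
      linarith [exp_pos (-|t|)]
    nlinarith [mul_cosh_le_cosh_add hr hx t]
  have hr2 : 0 < (1 - r) / 2 := by linarith
  calc (cosh t + x) ^ (-a) ≤ ((1 - r) / 2 * exp |t|) ^ (-a) :=
        rpow_le_rpow_of_nonpos (by positivity) hbase (by linarith)
    _ = ((1 - r) / 2) ^ (-a) * exp (-(a * |t|)) := by
        rw [mul_rpow hr2.le (exp_pos _).le, ← exp_mul]
        ring_nf

lemma continuous_cosh_add_rpow (hx : -1 < x) (p : ℝ) :
    Continuous fun t : ℝ => (cosh t + x) ^ p :=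
  (continuous_cosh.add continuous_const).rpow_const fun t => Or.inl (cosh_add_pos hx t).ne'

lemma integrable_cosh_add_rpow_neg (ha : 0 < a) (hx : -1 < x) :
    Integrable fun t : ℝ => (cosh t + x) ^ (-a) := by
  refine ((integrable_exp_neg_mul_abs ha).const_mul (((1 - max 0 (-x)) / 2) ^ (-a))).mono'
    (continuous_cosh_add_rpow hx _).aestronglyMeasurable (.of_forall fun t => ?_)
  rw [norm_of_nonneg (rpow_nonneg (cosh_add_pos hx t).le _)]
  refine cosh_add_rpow_neg_le ha (le_max_left _ _) (max_lt one_pos (by linarith)) ?_ t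
  linarith [le_max_right 0 (-x)]

lemma coshIntegral_pos (ha : 0 < a) (hx : -1 < x) : 0 < coshIntegral a x := by
  have hpos (t : ℝ) : 0 < (cosh t + x) ^ (-a) := rpow_pos_of_pos (cosh_add_pos hx t) _
  have hsupp : Function.support (fun t : ℝ => (cosh t + x) ^ (-a)) = univ :=
    eq_univ_of_forall fun t => (hpos t).ne'
  rw [coshIntegral, integral_pos_iff_support_of_nonneg (fun t => (hpos t).le)
    (integrable_cosh_add_rpow_neg ha hx), hsupp]
  simp

lemma hasDerivAt_coshIntegral (ha : 0 < a) (hx : -1 < x) :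
    HasDerivAt (coshIntegral a) (-a * coshIntegral (a + 1) x) x := by
  obtain ⟨r, hr, hr1⟩ : ∃ r, max 0 (-x) < r ∧ r < 1 :=
    exists_between (max_lt one_pos (by linarith))
  obtain ⟨hr0, hxr⟩ := max_lt_iff.1 hr
  have hlt {y : ℝ} (hy : y ∈ Ioi (-r)) : -1 < y := by linarith [mem_Ioi.1 hy]
  have hderiv := (hasDerivAt_integral_of_dominated_loc_of_deriv_le
    (F := fun y t => (cosh t + y) ^ (-a)) (F' := fun y t => -a * (cosh t + y) ^ (-(a + 1)))
    (bound := fun t => a * (((1 - r) / 2) ^ (-(a + 1)) * exp (-((a + 1) * |t|))))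
    (Ioi_mem_nhds (by linarith : -r < x))
    (Filter.eventually_of_mem (Ioi_mem_nhds (by linarith : -r < x)) fun y hy =>
      (continuous_cosh_add_rpow (hlt hy) _).aestronglyMeasurable)
    (integrable_cosh_add_rpow_neg ha hx)
    ((continuous_cosh_add_rpow hx _).const_mul (-a)).aestronglyMeasurable
    (.of_forall fun t y hy => ?_)
    (((integrable_exp_neg_mul_abs (by linarith)).const_mul _).const_mul _)
    (.of_forall fun t y hy => ?_)).2
  · rw [integral_const_mul] at hderiv
    exact hderiv
  · rw [norm_mul, norm_neg, norm_of_nonneg ha.le,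
      norm_of_nonneg (rpow_nonneg (cosh_add_pos (hlt hy) t).le _)]
    gcongr
    exact cosh_add_rpow_neg_le (by linarith) hr0.le hr1 (mem_Ioi.1 hy).le t
  · refine (((hasDerivAt_id y).const_add (cosh t)).rpow_const (p := -a)
      (Or.inl (cosh_add_pos (hlt hy) t).ne')).congr_deriv ?_
    rw [id, one_mul, neg_add']

lemma rpow_neg_eq_mul_rpow_neg {y : ℝ} (hy : 0 < y) (a : ℝ) :
    y ^ (-a) = y * y ^ (-(a + 1)) := by
  rw [mul_comm, ← rpow_add_one hy.ne']
  ring_nf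

lemma hasDerivAt_sinh_mul_cosh_add_rpow (hx : -1 < x) (t : ℝ) :
    HasDerivAt (fun t => sinh t * (cosh t + x) ^ (-(a + 1)))
      ((1 - x ^ 2) * (a + 1) * (cosh t + x) ^ (-(a + 2)) +
        (2 * a + 1) * x * (cosh t + x) ^ (-(a + 1)) - a * (cosh t + x) ^ (-a)) t := by
  have hpos := cosh_add_pos hx t
  refine ((hasDerivAt_sinh t).mul (((hasDerivAt_cosh t).add_const x).rpow_const
    (p := -(a + 1)) (Or.inl hpos.ne'))).congr_deriv ?_
  rw [rpow_neg_eq_mul_rpow_neg hpos a, rpow_neg_eq_mul_rpow_neg hpos (a + 1),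
    show -(a + 1) - 1 = -(a + 2) by ring, show a + 1 + 1 = a + 2 by ring]
  linear_combination (-(a + 1) * (cosh t + x) ^ (-(a + 2))) * sinh_sq t

lemma integrable_sinh_mul_cosh_add_rpow (ha : 0 < a) (hx : -1 < x) :
    Integrable fun t => sinh t * (cosh t + x) ^ (-(a + 1)) := by
  set r := max 0 (-x)
  have hr1 : 0 < 1 - r := sub_pos.2 (max_lt one_pos (by linarith))
  refine ((integrable_cosh_add_rpow_neg ha hx).const_mul (1 / (1 - r))).mono'
    (continuous_sinh.mul (continuous_cosh_add_rpow hx _)).aestronglyMeasurable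
    (.of_forall fun t => ?_)
  have hsinh : |sinh t| ≤ cosh t := by
    rw [abs_sinh, ← cosh_abs]
    exact (sinh_lt_cosh _).le
  have hcosh : (1 - r) * cosh t ≤ cosh t + x :=
    mul_cosh_le_cosh_add (le_max_left _ _) (by linarith [le_max_right 0 (-x)]) t
  rw [norm_mul, norm_of_nonneg (rpow_nonneg (cosh_add_pos hx t).le _), norm_eq_abs,
    rpow_neg_eq_mul_rpow_neg (cosh_add_pos hx t) a, ← mul_assoc]
  gcongr
  · exact rpow_nonneg (cosh_add_pos hx t).le _
  · rw [div_mul_eq_mul_div, one_mul, le_div_iff₀ hr1]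
    nlinarith

lemma coshIntegral_recurrence (ha : 0 < a) (hx : -1 < x) :
    (1 - x ^ 2) * (a + 1) * coshIntegral (a + 2) x + (2 * a + 1) * x * coshIntegral (a + 1) x =
      a * coshIntegral a x := by
  have h0 := (integrable_cosh_add_rpow_neg ha hx).const_mul a
  have h1 := (integrable_cosh_add_rpow_neg (by linarith : 0 < a + 1) hx).const_mul
    ((2 * a + 1) * x)
  have h2 := (integrable_cosh_add_rpow_neg (by linarith : 0 < a + 2) hx).const_mul
    ((1 - x ^ 2) * (a + 1))
  have hzero := integral_eq_zero_of_hasDerivAt_of_integrable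
    (hasDerivAt_sinh_mul_cosh_add_rpow hx) ((h2.add h1).sub h0)
    (integrable_sinh_mul_cosh_add_rpow ha hx)
  have hsplit := (integral_sub (h2.add h1) h0).symm.trans hzero
  rw [integral_add' h2 h1, integral_const_mul, integral_const_mul, integral_const_mul] at hsplit
  simp only [coshIntegral]
  linarith

lemma one_add_mul_coshIntegral_le (ha : 0 < a) (hx : -1 < x) :
    (1 + x) * coshIntegral (a + 1) x ≤ coshIntegral a x := by
  rw [coshIntegral, coshIntegral, ← integral_const_mul]
  refine integral_mono ((integrable_cosh_add_rpow_neg (by linarith) hx).const_mul _)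
    (integrable_cosh_add_rpow_neg ha hx) fun t => ?_
  simp only [rpow_neg_eq_mul_rpow_neg (cosh_add_pos hx t) a]
  exact mul_le_mul_of_nonneg_right (by linarith [one_le_cosh t])
    (rpow_nonneg (cosh_add_pos hx t).le _)

lemma beta_self_eq_integral {b : ℝ} (hb : 0 < b) :
    ProbabilityTheory.beta b b = ∫ y in Ioo (0 : ℝ) 1, (y * (1 - y)) ^ (b - 1) := by
  have hofReal : ∀ y ∈ Ioo (0 : ℝ) 1, (y : ℂ) ^ ((b : ℂ) - 1) * (1 - (y : ℂ)) ^ ((b : ℂ) - 1) =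
      (((y * (1 - y)) ^ (b - 1) : ℝ) : ℂ) := by
    rintro y ⟨hy0, hy1⟩
    rw [mul_rpow hy0.le (by linarith), Complex.ofReal_mul, Complex.ofReal_cpow hy0.le,
      Complex.ofReal_cpow (by linarith)]
    push_cast
    rfl
  rw [ProbabilityTheory.beta_eq_betaIntegralReal b b hb hb, Complex.betaIntegral,
    intervalIntegral.integral_of_le zero_le_one, integral_Ioc_eq_integral_Ioo,
    setIntegral_congr_fun measurableSet_Ioo hofReal, integral_complex_ofReal, Complex.ofReal_re]

lemma sigmoid_two_mul_mul_one_sub (t : ℝ) :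
    sigmoid (2 * t) * (1 - sigmoid (2 * t)) = (2 * cosh t) ^ (-2 : ℝ) := by
  have hsq : exp (2 * t) = exp t ^ 2 := by rw [← exp_nat_mul]; norm_num
  rw [rpow_neg (by positivity), rpow_two, ← sigmoid_neg, sigmoid_def, sigmoid_def, cosh_eq,
    neg_neg, exp_neg, exp_neg, hsq]
  field_simp
  ring

lemma coshIntegral_zero_right (ha : 0 < a) :
    coshIntegral a 0 = 2 ^ (a - 1) * (Gamma (a / 2) ^ 2 / Gamma a) := by
  have hderiv (t : ℝ) : HasDerivAt (fun t => sigmoid (2 * t))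
      (2 * (2 * cosh t) ^ (-2 : ℝ)) t := by
    refine ((hasDerivAt_sigmoid (2 * t)).comp t ((hasDerivAt_id t).const_mul 2)).congr_deriv ?_
    rw [← sigmoid_two_mul_mul_one_sub]
    ring
  have hinj : InjOn (fun t => sigmoid (2 * t)) univ := fun s _ t _ hst => by
    linarith [sigmoid_injective hst]
  have himage : (fun t => sigmoid (2 * t)) '' univ = Ioo 0 1 := by
    rw [image_univ, ← range_sigmoid]
    exact (mul_left_surjective₀ two_ne_zero).range_comp sigmoid
  have hbeta : Gamma (a / 2) ^ 2 / Gamma a = ProbabilityTheory.beta (a / 2) (a / 2) := by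
    rw [ProbabilityTheory.beta, add_halves, sq]
  rw [hbeta, beta_self_eq_integral (by positivity), ← himage,
    integral_image_eq_integral_abs_deriv_smul MeasurableSet.univ
      (fun t _ => (hderiv t).hasDerivWithinAt) hinj, Measure.restrict_univ, ← integral_const_mul]
  refine integral_congr_ae (.of_forall fun t => ?_)
  have hcosh := cosh_pos t
  simp only [add_zero, smul_eq_mul, sigmoid_two_mul_mul_one_sub]
  rw [abs_of_pos (by positivity), ← rpow_mul (by positivity), mul_assoc 2,
    ← rpow_add (by positivity), show -2 + -2 * (a / 2 - 1) = -a by ring,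
    mul_rpow two_pos.le hcosh.le, ← mul_assoc, ← mul_assoc, ← rpow_add_one two_ne_zero,
    ← rpow_add two_pos]
  simp

lemma mul_coshIntegral_add_one_zero_right (ha : 0 < a) :
    a * coshIntegral (a + 1) 0 =
      2 * (Gamma ((a + 1) / 2) / Gamma (a / 2)) ^ 2 * coshIntegral a 0 := by
  have h1 := (Gamma_pos_of_pos ha).ne'
  have h2 := (Gamma_pos_of_pos (half_pos ha)).ne'
  rw [coshIntegral_zero_right ha, coshIntegral_zero_right (by linarith), Gamma_add_one ha.ne',
    add_sub_right_comm, rpow_add_one two_ne_zero]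
  field_simp

end CoshIntegral

section Tangent

lemma convexOn_tan : ConvexOn ℝ (Ico 0 (π / 2)) tan := by
  have hcos : ∀ y ∈ Ico 0 (π / 2), 0 < cos y := fun y hy =>
    cos_pos_of_mem_Ioo ⟨by linarith [hy.1, pi_pos], hy.2⟩
  refine MonotoneOn.convexOn_of_deriv (convex_Ico _ _)
    (fun y hy => (hasDerivAt_tan (hcos y hy).ne').continuousAt.continuousWithinAt)
    (fun y hy => ((hasDerivAt_tan
      (hcos y (interior_subset hy)).ne').differentiableAt).differentiableWithinAt) ?_
  rw [interior_Ico]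
  intro y hy z hz hyz
  rw [deriv_tan, deriv_tan]
  have hz' := hcos z (Ioo_subset_Ico_self hz)
  have : cos z ≤ cos y :=
    cos_le_cos_of_nonneg_of_le_pi hy.1.le (by linarith [hz.2, pi_pos]) hyz
  gcongr

lemma tan_mul_le {w x : ℝ} (hw : w ∈ Icc (0 : ℝ) 1) (hx : x ∈ Ico 0 (π / 2)) :
    tan (w * x) ≤ w * tan x := by
  simpa using convexOn_tan.2 (left_mem_Ico.2 pi_div_two_pos) hx (sub_nonneg.2 hw.2) hw.1
    (sub_add_cancel 1 w)

lemma tan_pi_div_eight_sq_add : tan (π / 8) ^ 2 + 2 * tan (π / 8) = 1 := by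
  have hcos : cos (π / 8) ≠ 0 :=
    (cos_pos_of_mem_Ioo ⟨by linarith [pi_pos], by linarith [pi_pos]⟩).ne'
  have hdouble : 2 * sin (π / 8) * cos (π / 8) = cos (π / 8) ^ 2 - sin (π / 8) ^ 2 := by
    rw [← sin_two_mul, ← cos_two_mul', show 2 * (π / 8) = π / 4 by ring, sin_pi_div_four,
      cos_pi_div_four]
  rw [tan_eq_sin_div_cos]
  field_simp
  linarith

variable {κ : ℝ}

lemma tan_mul_one_add_tan_pi_div_four_sub (hκ : κ ∈ Ioo 0 (π / 4)) :
    tan κ * (1 + tan (π / 4 - κ)) = 1 - tan (π / 4 - κ) := by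
  have hsin : 0 < sin κ := sin_pos_of_pos_of_lt_pi hκ.1 (by linarith [hκ.2, pi_pos])
  have hcos : 0 < cos κ := cos_pos_of_mem_Ioo ⟨by linarith [hκ.1, pi_pos],
    by linarith [hκ.2, pi_pos]⟩
  rw [tan_eq_sin_div_cos, tan_eq_sin_div_cos, sin_sub, cos_sub, sin_pi_div_four, cos_pi_div_four,
    ← mul_sub, ← mul_add, mul_div_mul_left _ _ (by positivity)]
  field_simp
  ring

lemma tan_pi_div_four_sub_mem_Ioo (hκ : κ ∈ Ioo 0 (π / 4)) : tan (π / 4 - κ) ∈ Ioo (0 : ℝ) 1 := by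
  refine ⟨tan_pos_of_pos_of_lt_pi_div_two (by linarith [hκ.2]) (by linarith [hκ.1, pi_pos]), ?_⟩
  rw [← tan_pi_div_four]
  exact tan_lt_tan_of_nonneg_of_lt_pi_div_two (by linarith [hκ.2]) (by linarith [pi_pos])
    (by linarith [hκ.1])

lemma tan_half_le (hκ : κ ∈ Ioo 0 (π / 4)) :
    tan (κ / 2) ≤ (1 - tan (π / 4 - κ)) * tan (π / 8) := by
  have hpi := pi_pos
  have hw : 4 * κ / π ∈ Icc (0 : ℝ) 1 :=
    ⟨by have := hκ.1; positivity, by rw [div_le_one hpi]; linarith [hκ.2]⟩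
  have hhalf : tan (κ / 2) ≤ 4 * κ / π * tan (π / 8) := by
    convert tan_mul_le hw (x := π / 8) ⟨by positivity, by linarith⟩ using 2
    field_simp
    ring
  have hcompl : tan (π / 4 - κ) ≤ 1 - 4 * κ / π := by
    have h := tan_mul_le (w := 1 - 4 * κ / π) (x := π / 4) ⟨by linarith [hw.2], by linarith [hw.1]⟩
      ⟨by positivity, by linarith⟩
    rw [tan_pi_div_four, mul_one] at h
    convert h using 2
    field_simp
  exact hhalf.trans (mul_le_mul_of_nonneg_right (by linarith)
    (tan_pos_of_pos_of_lt_pi_div_two (by positivity) (by linarith)).le)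

lemma sq_add_two_mul_le_one_sub_sq {p q M : ℝ} (hq : q ^ 2 + 2 * q = 1) (hq0 : 0 < q)
    (hp : p ∈ Ioo (0 : ℝ) 1) (hM0 : 0 ≤ M) (hM : M ≤ (1 - p) * (q + p / 3)) :
    M ^ 2 + 2 * M ≤ 1 - p ^ 2 := by
  obtain ⟨hp0, hp1⟩ := hp
  have hq2 : q < 1 / 2 := by nlinarith
  have hfactor : (1 - p) * (q + p / 3) ^ 2 + 2 * (q + p / 3) ≤ 1 + p := by
    have : 0 ≤ p * (1 / 3 + q ^ 2 - 2 * q / 3 + p * (2 * q / 3 - 1 / 9) + p ^ 2 / 9) := by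
      have : 1 / 3 < q := by nlinarith
      have : 0 < 2 * q / 3 - 1 / 9 := by linarith
      have : 0 < 1 / 3 + q ^ 2 - 2 * q / 3 := by nlinarith
      positivity
    linear_combination this + hq
  calc M ^ 2 + 2 * M ≤ ((1 - p) * (q + p / 3)) ^ 2 + 2 * ((1 - p) * (q + p / 3)) := by gcongr
    _ = (1 - p) * ((1 - p) * (q + p / 3) ^ 2 + 2 * (q + p / 3)) := by ring
    _ ≤ (1 - p) * (1 + p) := by gcongr
    _ = 1 - p ^ 2 := by ring

lemma frequency_equation_le {ν : ℝ} (hκ : κ ∈ Ioo 0 (π / 4))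
    (hν : ν = √(1 + tan (π / 4 - κ) ^ 2) / 2) :
    ν * tan (ν * κ) + (ν * tan (ν * κ)) ^ 2 + ν ^ 2 ≤ 1 / 2 := by
  have hpi := pi_pos
  have hp := tan_pi_div_four_sub_mem_Ioo hκ
  have ht := tan_mul_one_add_tan_pi_div_four_sub hκ
  have hy := tan_half_le hκ
  have hq0 : 0 < tan (π / 8) := tan_pos_of_pos_of_lt_pi_div_two (by positivity) (by linarith)
  have hy0 : 0 < tan (κ / 2) :=
    tan_pos_of_pos_of_lt_pi_div_two (by linarith [hκ.1]) (by linarith [hκ.2])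
  have ht0 : 0 < tan κ := tan_pos_of_pos_of_lt_pi_div_two hκ.1 (by linarith [hκ.2])
  set p := tan (π / 4 - κ)
  have hsq : (2 * ν) ^ 2 = 1 + p ^ 2 := by
    rw [hν, mul_div_cancel₀ _ two_ne_zero, sq_sqrt (by positivity)]
  obtain ⟨hp0, hp1⟩ := hp
  have hν0 : 0 ≤ ν := by rw [hν]; positivity
  have hν1 : 1 + p ^ 2 / 3 ≤ 2 * ν := by
    refine le_of_sq_le_sq ?_ (by linarith)
    rw [hsq]
    nlinarith [mul_pos hp0 hp0, mul_lt_mul'' hp1 hp1 hp0.le hp0.le]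
  have hν2 : 2 * ν ≤ 2 := by nlinarith
  have hchord : tan (ν * κ) ≤ (2 - 2 * ν) * tan (κ / 2) + (2 * ν - 1) * tan κ := by
    have h := convexOn_tan.2 (show κ / 2 ∈ Ico 0 (π / 2) from ⟨by linarith [hκ.1],
      by linarith [hκ.2]⟩) (show κ ∈ Ico 0 (π / 2) from ⟨hκ.1.le, by linarith [hκ.2]⟩)
      (show 0 ≤ 2 - 2 * ν by linarith) (show 0 ≤ 2 * ν - 1 by nlinarith) (by ring)
    simp only [smul_eq_mul] at h
    rwa [show (2 - 2 * ν) * (κ / 2) + (2 * ν - 1) * κ = ν * κ by ring] at h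
  have htan0 : 0 ≤ tan (ν * κ) := tan_nonneg_of_nonneg_of_le_pi_div_two
    (mul_nonneg hν0 hκ.1.le) (by nlinarith [hκ.1, hκ.2])
  have hbound : 2 * (ν * tan (ν * κ)) ≤ (1 - p) * (tan (π / 8) + p / 3) := by
    calc 2 * (ν * tan (ν * κ))
        ≤ 2 * (ν * ((2 - 2 * ν) * tan (κ / 2) + (2 * ν - 1) * tan κ)) := by gcongr
      _ = (2 * (2 * ν) - (2 * ν) ^ 2) * tan (κ / 2) + ((2 * ν) ^ 2 - 2 * ν) * tan κ := by ring
      _ ≤ 1 * tan (κ / 2) + 2 / 3 * p ^ 2 * tan κ := by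
          gcongr
          · nlinarith [sq_nonneg (2 * ν - 1)]
          · linarith
      _ ≤ (1 - p) * (tan (π / 8) + p / 3) := by nlinarith [mul_pos hp0 ht0]
  have := sq_add_two_mul_le_one_sub_sq tan_pi_div_eight_sq_add hq0 ⟨hp0, hp1⟩ (by positivity) hbound
  linarith

lemma exists_frequency_equation_eq (hκ : κ ∈ Ioo 0 (π / 4)) :
    ∃ ν ∈ Icc (√(1 + tan (π / 4 - κ) ^ 2) / 2) 1, 0 ≤ tan (ν * κ) ∧
      ν * tan (ν * κ) + (ν * tan (ν * κ)) ^ 2 + ν ^ 2 = 1 / 2 := by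
  have hpi := pi_pos
  have hlow := frequency_equation_le hκ rfl
  obtain ⟨hp0, hp1⟩ := tan_pi_div_four_sub_mem_Ioo hκ
  set p := tan (π / 4 - κ)
  have hsqrt : √(1 + p ^ 2) ^ 2 = 1 + p ^ 2 := sq_sqrt (by positivity)
  have hle : √(1 + p ^ 2) / 2 ≤ 1 := by nlinarith [sqrt_nonneg (1 + p ^ 2)]
  have hmul : ∀ ν ∈ Icc (√(1 + p ^ 2) / 2) 1, ν * κ ∈ Ico 0 (π / 2) := by
    rintro ν ⟨hν0, hν1⟩
    have hν : 0 ≤ ν := hν0.trans' (by positivity)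
    exact ⟨mul_nonneg hν hκ.1.le, by nlinarith [hκ.1, hκ.2]⟩
  have htan0 : ∀ ν ∈ Icc (√(1 + p ^ 2) / 2) 1, 0 ≤ tan (ν * κ) := fun ν hν =>
    tan_nonneg_of_nonneg_of_le_pi_div_two (hmul ν hν).1 (hmul ν hν).2.le
  have hcont : ContinuousOn (fun ν => ν * tan (ν * κ) + (ν * tan (ν * κ)) ^ 2 + ν ^ 2)
      (Icc (√(1 + p ^ 2) / 2) 1) := by
    have htan : ContinuousOn (fun ν => tan (ν * κ)) (Icc (√(1 + p ^ 2) / 2) 1) :=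
      continuousOn_tan_Ioo.comp (by fun_prop) fun ν hν =>
        ⟨by linarith [(hmul ν hν).1], (hmul ν hν).2⟩
    fun_prop
  have hhigh := htan0 1 (right_mem_Icc.2 hle)
  obtain ⟨ν, hν, hνeq⟩ := intermediate_value_Icc hle hcont ⟨hlow, by nlinarith⟩
  exact ⟨ν, hν, htan0 ν hν, hνeq⟩

lemma exists_frequency (hκ : κ ∈ Ioo 0 (π / 4)) :
    ∃ ν lam : ℝ, 0 < ν ∧ 0 ≤ lam ∧ lam ^ 2 + 1 / 4 = ν ^ 2 ∧ 0 ≤ ν * tan (ν * κ) ∧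
      ν * tan (ν * κ) + (ν * tan (ν * κ)) ^ 2 = 1 / 4 - lam ^ 2 ∧
      (1 / 2 - lam) * cos κ ≤ (1 / 2 + lam) * sin κ := by
  have hpi := pi_pos
  obtain ⟨ν, ⟨hν0, -⟩, htanν, hν⟩ := exists_frequency_equation_eq hκ
  obtain ⟨hp0, -⟩ := tan_pi_div_four_sub_mem_Ioo hκ
  have htan := tan_mul_one_add_tan_pi_div_four_sub hκ
  set p := tan (π / 4 - κ)
  have hνpos : 0 < ν := hν0.trans_lt' (by positivity)
  have hνp : (1 + p ^ 2) / 4 ≤ ν ^ 2 := by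
    have hsq := pow_le_pow_left₀ (by positivity) hν0 2
    rw [div_pow, sq_sqrt (by positivity)] at hsq
    linarith
  have hlam : √(ν ^ 2 - 1 / 4) ^ 2 = ν ^ 2 - 1 / 4 := sq_sqrt (by nlinarith)
  have hplam : p / 2 ≤ √(ν ^ 2 - 1 / 4) := le_sqrt_of_sq_le (by linarith)
  have hcos : 0 < cos κ := cos_pos_of_mem_Ioo ⟨by linarith [hκ.1], by linarith [hκ.2]⟩
  have : 0 < tan κ := tan_pos_of_pos_of_lt_pi_div_two hκ.1 (by linarith [hκ.2])
  refine ⟨ν, √(ν ^ 2 - 1 / 4), hνpos, sqrt_nonneg _, by linarith, by positivity, by linarith, ?_⟩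
  rw [← tan_mul_cos hcos.ne', ← mul_assoc]
  exact mul_le_mul_of_nonneg_right (by nlinarith) hcos.le

end Tangent

section CoshMix

/-- The combination `coshIntegral a x + s * coshIntegral a (-x)` of the two solutions of the
hypergeometric equation; `s` tunes the boundary slope at `x = 0`. -/
noncomputable def coshMix (a s x : ℝ) : ℝ := coshIntegral a x + s * coshIntegral a (-x)

variable {a s x : ℝ}

lemma hasDerivAt_coshMix (ha : 0 < a) (hx : |x| < 1) :
    HasDerivAt (coshMix a s) (-a * coshMix (a + 1) (-s) x) x := by
  obtain ⟨hx₁, hx₂⟩ := abs_lt.1 hx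
  have hreflect := (hasDerivAt_coshIntegral ha (neg_lt_neg hx₂)).comp x (hasDerivAt_neg x)
  refine ((hasDerivAt_coshIntegral ha hx₁).add (hreflect.const_mul s)).congr_deriv ?_
  simp only [coshMix]
  ring

lemma coshMix_recurrence (ha : 0 < a) (hx : |x| < 1) :
    (1 - x ^ 2) * (a + 1) * coshMix (a + 2) s x + (2 * a + 1) * x * coshMix (a + 1) (-s) x =
      a * coshMix a s x := by
  obtain ⟨hx₁, hx₂⟩ := abs_lt.1 hx
  have h := coshIntegral_recurrence ha hx₁
  have hreflect := coshIntegral_recurrence ha (neg_lt_neg hx₂)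
  simp only [coshMix]
  linear_combination h + s * hreflect

lemma coshMix_pos (ha : 0 < a) (hs : 0 ≤ s) (hx : |x| < 1) : 0 < coshMix a s x := by
  obtain ⟨hx₁, hx₂⟩ := abs_lt.1 hx
  have := coshIntegral_pos ha hx₁
  have := coshIntegral_pos ha (neg_lt_neg hx₂)
  unfold coshMix
  positivity

lemma one_add_mul_coshMix_le (ha : 0 < a) (hs : 0 ≤ s) (hx : |x| < 1) :
    (1 + x) * coshMix (a + 1) (-s) x ≤ coshMix a s x := by
  obtain ⟨hx₁, hx₂⟩ := abs_lt.1 hx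
  have h := one_add_mul_coshIntegral_le ha hx₁
  have h₁ : 0 ≤ s * coshIntegral a (-x) := mul_nonneg hs (coshIntegral_pos ha (neg_lt_neg hx₂)).le
  have h₂ : 0 ≤ (1 + x) * (s * coshIntegral (a + 1) (-x)) :=
    mul_nonneg (by linarith) (mul_nonneg hs (coshIntegral_pos (by linarith) (neg_lt_neg hx₂)).le)
  simp only [coshMix]
  linarith

end CoshMix

section AngularProfile

variable {a κ α : ℝ}

lemma cos_pos_of_mem_Ico (ha : a ∈ Ico 0 (π / 2)) : 0 < cos a :=
  cos_pos_of_mem_Ioo ⟨by linarith [ha.1, pi_pos], ha.2⟩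

lemma sin_nonneg_of_mem_Ico (ha : a ∈ Ico 0 (π / 2)) : 0 ≤ sin a :=
  sin_nonneg_of_nonneg_of_le_pi ha.1 (by linarith [ha.2, pi_pos])

lemma sin_lt_one_of_mem_Ico (ha : a ∈ Ico 0 (π / 2)) : sin a < 1 := by
  nlinarith [sin_sq_add_cos_sq a, cos_pos_of_mem_Ico ha, sin_nonneg_of_mem_Ico ha]

/-- The logarithmic derivative `α * tan a - (log (coshMix α s ∘ sin))'` of a ground state of a
sector, as a function of the angle `a`. -/
noncomputable def riccatiSolution (α s a : ℝ) : ℝ :=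
  α * tan a + α * (cos a * (coshMix (α + 1) (-s) (sin a) / coshMix α s (sin a)))

lemma hasDerivAt_riccatiSolution {s : ℝ} (hα : 0 < α) (hs : 0 ≤ s) (ha : a ∈ Ico 0 (π / 2)) :
    HasDerivAt (riccatiSolution α s)
      (riccatiSolution α s a ^ 2 + α * (1 - α) / cos a ^ 2) a := by
  have hcos := (cos_pos_of_mem_Ico ha).ne'
  have hsin : |sin a| < 1 := by
    rw [abs_of_nonneg (sin_nonneg_of_mem_Ico ha)]
    exact sin_lt_one_of_mem_Ico ha
  have hne := (coshMix_pos hα hs hsin).ne'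
  have hrec := coshMix_recurrence (s := s) hα hsin
  have hden := (hasDerivAt_coshMix (s := s) hα hsin).comp a (hasDerivAt_sin a)
  have hnum := (hasDerivAt_coshMix (a := α + 1) (s := -s) (by linarith) hsin).comp a
    (hasDerivAt_sin a)
  refine (((hasDerivAt_tan hcos).const_mul α).add
    (((hasDerivAt_cos a).mul (hnum.div hden hne)).const_mul α)).congr_deriv ?_
  rw [neg_neg, show α + 1 + 1 = α + 2 by ring]
  have hsolve : coshMix (α + 2) s (sin a) =
      (α * coshMix α s (sin a) - (2 * α + 1) * sin a * coshMix (α + 1) (-s) (sin a)) /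
        (cos a ^ 2 * (α + 1)) := by
    rw [eq_div_iff (by positivity), ← hrec, cos_sq']
    ring
  simp only [riccatiSolution, Function.comp_apply, Pi.div_apply, neg_mul, hsolve,
    tan_eq_sin_div_cos]
  field_simp
  linear_combination (-α * coshMix α s (sin a) ^ 2) * sin_sq_add_cos_sq a

lemma riccatiSolution_zero {s : ℝ} (hα : 0 < α) (hs : 0 ≤ s) :
    riccatiSolution α s 0 * (1 + s) =
      2 * (Gamma ((α + 1) / 2) / Gamma (α / 2)) ^ 2 * (1 - s) := by
  have hW := mul_coshIntegral_add_one_zero_right hα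
  have hpos := coshIntegral_pos hα (show (-1 : ℝ) < 0 by norm_num)
  simp only [riccatiSolution, coshMix, tan_zero, cos_zero, sin_zero, neg_zero]
  generalize 2 * (Gamma ((α + 1) / 2) / Gamma (α / 2)) ^ 2 = K at *
  field_simp
  linear_combination (1 - s) * hW

lemma cos_mul_riccatiSolution_le {s : ℝ} (hα : 0 < α) (hs : 0 ≤ s) (ha : a ∈ Ico 0 (π / 2)) :
    cos a * riccatiSolution α s a ≤ α := by
  have hcos := (cos_pos_of_mem_Ico ha).ne'
  have hsin1 := sin_lt_one_of_mem_Ico ha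
  have hsin : |sin a| < 1 := by rwa [abs_of_nonneg (sin_nonneg_of_mem_Ico ha)]
  have hratio : (1 + sin a) * (coshMix (α + 1) (-s) (sin a) / coshMix α s (sin a)) ≤ 1 := by
    rw [← mul_div_assoc, div_le_one (coshMix_pos hα hs hsin)]
    exact one_add_mul_coshMix_le hα hs hsin
  calc cos a * riccatiSolution α s a
      = α * sin a + α * ((1 - sin a) *
          ((1 + sin a) * (coshMix (α + 1) (-s) (sin a) / coshMix α s (sin a)))) := by
        rw [riccatiSolution, tan_eq_sin_div_cos]
        field_simp
        rw [cos_sq']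
        ring
    _ ≤ α * sin a + α * ((1 - sin a) * 1) := by
        have : 0 ≤ 1 - sin a := by linarith
        gcongr
    _ = α := by ring

lemma exists_riccati_solution {m : ℝ} (hα : 0 < α) (hα1 : α ≤ 1) (hm : 0 ≤ m)
    (hmK : m ≤ 2 * (Gamma ((α + 1) / 2) / Gamma (α / 2)) ^ 2) :
    ∃ g : ℝ → ℝ, g 0 = m ∧
      (∀ a ∈ Ico 0 (π / 2), HasDerivAt g (g a ^ 2 + α * (1 - α) / cos a ^ 2) a) ∧
      ∀ a ∈ Ico 0 (π / 2), 0 ≤ g a ∧ cos a * g a ≤ α := by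
  set K := 2 * (Gamma ((α + 1) / 2) / Gamma (α / 2)) ^ 2
  have hKpos : 0 < K := by
    have := Gamma_pos_of_pos (show 0 < (α + 1) / 2 by linarith)
    have := Gamma_pos_of_pos (show 0 < α / 2 by linarith)
    positivity
  set s := (K - m) / (K + m) with hs
  have hs0 : 0 ≤ s := div_nonneg (by linarith) (by linarith)
  have hzero : riccatiSolution α s 0 = m := by
    have hsum : m * (1 + s) = K * (1 - s) := by
      rw [hs]
      field_simp
      ring
    exact mul_right_cancel₀ (by positivity) ((riccatiSolution_zero hα hs0).trans hsum.symm)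
  have hderiv := fun a ha => hasDerivAt_riccatiSolution (a := a) hα hs0 ha
  have hmono : MonotoneOn (riccatiSolution α s) (Ico 0 (π / 2)) := by
    refine monotoneOn_of_hasDerivWithinAt_nonneg (convex_Ico _ _)
      (fun a ha => (hderiv a ha).continuousAt.continuousWithinAt)
      (fun a ha => (hderiv a (interior_subset ha)).hasDerivWithinAt) fun a _ => ?_
    have : 0 ≤ 1 - α := by linarith
    positivity
  refine ⟨riccatiSolution α s, hzero, hderiv,
    fun a ha => ⟨?_, cos_mul_riccatiSolution_le hα hs0 ha⟩⟩
  have h0 := hmono ⟨le_rfl, ha.1.trans_lt ha.2⟩ ha ha.1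
  linarith

/-- The data of a trial field for the half `κ` of the excess angle `β - π` of a reflex vertex,
with Hardy constant `α * (1 - α)`. In the sector of opening `2 * κ` around the axis, where the
nearest boundary point is the vertex, the field is `(lam * r̂ + freq * tan (freq * ψ) * θ̂) / r`;
an angle `a` beyond that sector its angular part becomes `slope a`. The remaining laws make the
field continuously differentiable, satisfy the Riccati inequality, and jump with the right sign. -/
structure AngularProfile (κ α : ℝ) where
  lam : ℝ
  freq : ℝ
  slope : ℝ → ℝ
  slope' : ℝ → ℝ
  angle_mem : κ ∈ Ioo 0 (π / 2)
  half_le : 1 / 2 ≤ α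
  le_one : α ≤ 1
  lam_nonneg : 0 ≤ lam
  freq_pos : 0 < freq
  lam_sq_add : lam ^ 2 + α * (1 - α) = freq ^ 2
  hasDerivAt_slope : ∀ a ∈ Ico 0 (π / 2), HasDerivAt slope (slope' a) a
  continuousOn_slope' : ContinuousOn slope' (Ico 0 (π / 2))
  slope_zero : slope 0 = freq * tan (freq * κ)
  slope'_zero : slope' 0 = freq ^ 2 + slope 0 ^ 2
  riccati : ∀ a ∈ Ico 0 (π / 2), slope a ^ 2 + lam ^ 2 + α * (1 - α) / cos a ^ 2 ≤ slope' a
  lam_mul_sin_le : ∀ a ∈ Ico 0 (π / 2), lam * sin a ≤ cos a * slope a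
  cos_mul_slope_le : ∀ a ∈ Ico 0 (π / 2), cos a * slope a ≤ α - lam + lam * sin a
  edge : (α - lam) * cos κ ≤ (α + lam) * sin κ

namespace AngularProfile

variable (p : AngularProfile κ α)
include p

lemma lam_le : p.lam ≤ α := by
  have hzero : (0 : ℝ) ∈ Ico 0 (π / 2) := ⟨le_rfl, by positivity⟩
  have hlow := p.lam_mul_sin_le 0 hzero
  have hhigh := p.cos_mul_slope_le 0 hzero
  simp only [sin_zero, mul_zero, add_zero] at hlow hhigh
  linarith

lemma freq_le_one : p.freq ≤ 1 := by
  nlinarith [p.lam_sq_add, p.lam_le, p.half_le, p.le_one, p.lam_nonneg, p.freq_pos]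

lemma freq_le_lam_add : p.freq ≤ p.lam + α := by
  nlinarith [p.lam_sq_add, p.lam_nonneg, p.half_le, p.freq_pos]

lemma jump_add_nonneg {h : ℝ} (ha : a ∈ Ico 0 (π / 2)) (hh : h ∈ Ioo κ (π / 2)) :
    0 ≤ cos a * (p.lam * sin (a + h) - p.slope a * cos (a + h)) + α * sin h := by
  have hκ := p.angle_mem
  have hG₀ := p.lam_mul_sin_le a ha
  have hG₁ := p.cos_mul_slope_le a ha
  have hα := p.half_le
  have hlam := p.lam_nonneg
  have := p.lam_le
  have hsinκh : sin κ ≤ sin h :=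
    sin_le_sin_of_le_of_le_pi_div_two (by linarith [hκ.1, pi_pos]) hh.2.le hh.1.le
  have hsinκ : 0 < sin κ := sin_pos_of_pos_of_lt_pi hκ.1 (by linarith [hκ.2, pi_pos])
  have hexpand : cos a * sin (a + h) = sin h + sin a * cos (a + h) := by
    rw [sin_add, cos_add]
    linear_combination sin h * sin_sq_add_cos_sq a
  suffices hmain : (cos a * p.slope a - p.lam * sin a) * cos (a + h) ≤ (α + p.lam) * sin h by
    linear_combination hmain + (-p.lam) * hexpand
  rcases le_or_gt (cos (a + h)) 0 with hcos | hcos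
  · exact (mul_nonpos_of_nonneg_of_nonpos (by linarith) hcos).trans
      (mul_nonneg (by linarith) (by linarith))
  · have hcosκ : cos (a + h) ≤ cos κ :=
      cos_le_cos_of_nonneg_of_le_pi hκ.1.le (by linarith [ha.2, hh.2]) (by linarith [ha.1, hh.1])
    calc (cos a * p.slope a - p.lam * sin a) * cos (a + h)
        ≤ (α - p.lam) * cos κ :=
          mul_le_mul (by linarith) hcosκ hcos.le (by linarith)
      _ ≤ (α + p.lam) * sin κ := p.edge
      _ ≤ (α + p.lam) * sin h := by gcongr

lemma jump_sub_nonneg {h : ℝ} (ha : a ∈ Ico 0 (π / 2)) (hh : h ∈ Ioo 0 (π / 2 - κ)) :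
    0 ≤ cos a * (p.lam * sin (h - a) + p.slope a * cos (h - a)) + α * sin h := by
  have hκ := p.angle_mem.1
  have hα := p.half_le
  have hsin : 0 < sin h := sin_pos_of_pos_of_lt_pi hh.1 (by linarith [hh.2, pi_pos])
  have hcos : 0 < cos (h - a) := cos_pos_of_mem_Ioo ⟨by linarith [hh.1, ha.2],
    by linarith [hh.2, ha.1]⟩
  have hexpand : sin h = cos a * sin (h - a) + sin a * cos (h - a) := by
    nth_rw 1 [show h = (h - a) + a by ring, sin_add]
    ring
  have h₁ : 0 ≤ (cos a * p.slope a - p.lam * sin a) * cos (h - a) :=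
    mul_nonneg (sub_nonneg.2 (p.lam_mul_sin_le a ha)) hcos.le
  have h₂ : 0 ≤ (α + p.lam) * sin h := mul_nonneg (by linarith [p.lam_nonneg]) hsin.le
  linear_combination h₁ + h₂ + p.lam * hexpand

end AngularProfile

lemma hasDerivAt_add_mul_sin_div_cos {m : ℝ} (ha : a ∈ Ico 0 (π / 2)) :
    HasDerivAt (fun x => (1 / 2 * sin x + m * (1 - sin x)) / cos x)
      (1 / 2 / cos a ^ 2 - m / (1 + sin a)) a := by
  have hcos := (cos_pos_of_mem_Ico ha).ne'
  have hsin : 1 + sin a ≠ 0 := by linarith [sin_nonneg_of_mem_Ico ha]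
  refine ((((hasDerivAt_sin a).const_mul (1 / 2)).add
    (((hasDerivAt_sin a).const_sub 1).const_mul m)).div (hasDerivAt_cos a) hcos).congr_deriv ?_
  simp only [Pi.add_apply]
  have hfactor : m / (1 + sin a) = m * (1 - sin a) / cos a ^ 2 := by
    rw [div_eq_div_iff hsin (pow_ne_zero 2 hcos), cos_sq']
    ring
  rw [hfactor, ← sub_div]
  congr 1
  linear_combination (1 / 2 - m) * sin_sq_add_cos_sq a

lemma riccati_of_add_mul_sin_div_cos {m lam : ℝ}
    (hlam : m + m ^ 2 = 1 / 4 - lam ^ 2) (ha : a ∈ Ico 0 (π / 2)) :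
    ((1 / 2 * sin a + m * (1 - sin a)) / cos a) ^ 2 + lam ^ 2 + 1 / 2 * (1 - 1 / 2) / cos a ^ 2 ≤
      1 / 2 / cos a ^ 2 - m / (1 + sin a) := by
  have hcos := cos_pos_of_mem_Ico ha
  have hsin := sin_nonneg_of_mem_Ico ha
  have hsin' : 0 ≤ 1 - sin a := by linarith [sin_lt_one_of_mem_Ico ha]
  have hdefect : 1 / 2 / cos a ^ 2 - m / (1 + sin a) -
      (((1 / 2 * sin a + m * (1 - sin a)) / cos a) ^ 2 + lam ^ 2 +
        1 / 2 * (1 - 1 / 2) / cos a ^ 2) = 2 * m ^ 2 * sin a * (1 - sin a) / cos a ^ 2 := by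
    have hfactor : m / (1 + sin a) = m * (1 - sin a) / cos a ^ 2 := by
      rw [div_eq_div_iff (by positivity) (by positivity), cos_sq']
      ring
    rw [hfactor, show lam ^ 2 = 1 / 4 - m - m ^ 2 by linarith]
    field_simp
    rw [cos_sq']
    ring
  have : 0 ≤ 2 * m ^ 2 * sin a * (1 - sin a) / cos a ^ 2 := by positivity
  linarith

lemma nonempty_angularProfile_half (hκ : κ ∈ Ioo 0 (π / 4)) :
    Nonempty (AngularProfile κ (1 / 2)) := by
  obtain ⟨ν, lam, hν, hlam, hνlam, hm, hmlam, hedge⟩ := exists_frequency hκ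
  set m := ν * tan (ν * κ) with hmdef
  have hm_le : m ≤ 1 / 2 - lam := by
    have : lam ≤ 1 / 2 := by nlinarith
    nlinarith
  have hcancel : ∀ a ∈ Ico 0 (π / 2),
      cos a * ((1 / 2 * sin a + m * (1 - sin a)) / cos a) = 1 / 2 * sin a + m * (1 - sin a) :=
    fun a ha => mul_div_cancel₀ _ (cos_pos_of_mem_Ico ha).ne'
  exact ⟨{
    lam := lam
    freq := ν
    slope := fun a => (1 / 2 * sin a + m * (1 - sin a)) / cos a
    slope' := fun a => 1 / 2 / cos a ^ 2 - m / (1 + sin a)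
    angle_mem := ⟨hκ.1, by linarith [hκ.2, pi_pos]⟩
    half_le := le_rfl
    le_one := by norm_num
    lam_nonneg := hlam
    freq_pos := hν
    lam_sq_add := by linarith
    hasDerivAt_slope := fun a ha => hasDerivAt_add_mul_sin_div_cos ha
    continuousOn_slope' := by
      refine (continuousOn_const.div (by fun_prop) fun a ha => ?_).sub
        (continuousOn_const.div (by fun_prop) fun a ha => ?_)
      · exact pow_ne_zero 2 (cos_pos_of_mem_Ico ha).ne'
      · linarith [sin_nonneg_of_mem_Ico ha]
    slope_zero := by simp [hmdef]
    slope'_zero := by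
      simp only [cos_zero, sin_zero]
      linarith
    riccati := fun a ha => riccati_of_add_mul_sin_div_cos hmlam ha
    lam_mul_sin_le := fun a ha => by
      rw [hcancel a ha]
      nlinarith [sin_nonneg_of_mem_Ico ha, sin_lt_one_of_mem_Ico ha]
    cos_mul_slope_le := fun a ha => by
      rw [hcancel a ha]
      nlinarith [sin_lt_one_of_mem_Ico ha]
    edge := hedge }⟩

lemma nonempty_angularProfile_of_le {ν : ℝ} (hκ : κ ∈ Ico (π / 4) (π / 2)) (hα : 1 / 2 ≤ α)
    (hα1 : α ≤ 1) (hν : 0 < ν) (hνα : ν ^ 2 = α * (1 - α))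
    (hle : ν * tan (ν * κ) ≤ 2 * (Gamma ((α + 1) / 2) / Gamma (α / 2)) ^ 2) :
    Nonempty (AngularProfile κ α) := by
  have hκ0 : 0 < κ := by linarith [hκ.1, pi_pos]
  have hν1 : ν ≤ 1 := by nlinarith
  have hm : 0 ≤ ν * tan (ν * κ) := mul_nonneg hν.le
    (tan_nonneg_of_nonneg_of_le_pi_div_two (by positivity) (by nlinarith [hκ.2]))
  obtain ⟨g, hg0, hg', hg⟩ := exists_riccati_solution (by linarith) hα1 hm hle
  exact ⟨{
    lam := 0
    freq := ν
    slope := g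
    slope' := fun a => g a ^ 2 + α * (1 - α) / cos a ^ 2
    angle_mem := ⟨hκ0, hκ.2⟩
    half_le := hα
    le_one := hα1
    lam_nonneg := le_rfl
    freq_pos := hν
    lam_sq_add := by linarith
    hasDerivAt_slope := hg'
    continuousOn_slope' :=
      (ContinuousOn.pow (fun a ha => (hg' a ha).continuousAt.continuousWithinAt) 2).add
        (continuousOn_const.div (by fun_prop) fun a ha =>
          pow_ne_zero 2 (cos_pos_of_mem_Ico ha).ne')
    slope_zero := hg0
    slope'_zero := by
      rw [cos_zero]
      linarith
    riccati := fun a _ => by linarith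
    lam_mul_sin_le := fun a ha => by
      rw [zero_mul]
      exact mul_nonneg (cos_pos_of_mem_Ico ha).le (hg a ha).1
    cos_mul_slope_le := fun a ha => by linarith [(hg a ha).2]
    edge := by
      have : cos κ ≤ sin κ := by
        rw [← cos_pi_div_two_sub]
        exact cos_le_cos_of_nonneg_of_le_pi (by linarith [hκ.2]) (by linarith [hκ.2, pi_pos])
          (by linarith [hκ.1])
      nlinarith }⟩

lemma exists_angularProfile {β βcr c : ℝ} (hβ : π < β) (hβ2 : β < 2 * π) (hβcr : isBetaCr βcr)
    (hc : isHardyConst βcr β c) :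
    ∃ α, Nonempty (AngularProfile ((β - π) / 2) α) ∧ c ≤ α * (1 - α) := by
  have hc4 : 0 < c ∧ c ≤ 1 / 4 := by
    rcases hc with ⟨_, rfl⟩ | ⟨_, hc, _⟩
    · norm_num
    · exact hc
  rcases lt_or_ge ((β - π) / 2) (π / 4) with hκ | hκ
  · exact ⟨1 / 2, nonempty_angularProfile_half ⟨by linarith, hκ⟩, by linarith⟩
  set s := √(1 - 4 * c) with hs
  have hs0 : 0 ≤ s := sqrt_nonneg _
  have hs2 : s ^ 2 = 1 - 4 * c := sq_sqrt (by linarith)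
  have hα : (1 + s) / 2 * (1 - (1 + s) / 2) = c := by linarith
  refine ⟨(1 + s) / 2, nonempty_angularProfile_of_le ⟨hκ, by linarith⟩ (by linarith)
    (by nlinarith) (sqrt_pos.2 hc4.1) ((sq_sqrt hc4.1.le).trans hα.symm) ?_, hα.ge⟩
  rw [show ((1 + s) / 2 + 1) / 2 = (3 + s) / 4 by ring,
    show (1 + s) / 2 / 2 = (1 + s) / 4 by ring]
  rcases hc with ⟨hβ_le, rfl⟩ | ⟨_, _, heq⟩
  · have hs_eq : s = 0 := by norm_num [hs]
    have hsqrt : √(1 / 4 : ℝ) = 1 / 2 := by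
      rw [show (1 / 4 : ℝ) = (1 / 2) ^ 2 by norm_num, sqrt_sq (by norm_num)]
    have htan : tan ((β - π) / 4) ≤ tan ((βcr - π) / 4) :=
      strictMonoOn_tan.monotoneOn ⟨by linarith, by linarith⟩
        ⟨by linarith [hβcr.1.1], by linarith [hβcr.1.2]⟩ (by linarith)
    rw [hs_eq, hsqrt, add_zero, add_zero, show 1 / 2 * ((β - π) / 2) = (β - π) / 4 by ring]
    linarith [hβcr.2]
  · exact heq.le

end AngularProfile

section SoftMin

variable {ι : Type*} [Fintype ι] {N : ℝ} {φ : ι → ℝ}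

/-- The weights of the soft minimum of the family `φ` at inverse temperature `N`. -/
noncomputable def softMinWeight (N : ℝ) (φ : ι → ℝ) (i : ι) : ℝ :=
  exp (-N * φ i) / ∑ j, exp (-N * φ j)

lemma sum_exp_pos [Nonempty ι] : 0 < ∑ j, exp (-N * φ j) :=
  Finset.sum_pos (fun _ _ => exp_pos _) Finset.univ_nonempty

lemma softMinWeight_nonneg (i : ι) : 0 ≤ softMinWeight N φ i :=
  div_nonneg (exp_pos _).le (Finset.sum_nonneg fun _ _ => (exp_pos _).le)

lemma sum_softMinWeight [Nonempty ι] : ∑ i, softMinWeight N φ i = 1 := by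
  simp only [softMinWeight, ← Finset.sum_div]
  exact div_self sum_exp_pos.ne'

lemma softMinWeight_le_exp {s : ℝ} {i j : ι} (hN : 0 ≤ N) (h : φ j + s ≤ φ i) :
    softMinWeight N φ i ≤ exp (-N * s) := by
  have : Nonempty ι := ⟨i⟩
  rw [softMinWeight, div_le_iff₀ sum_exp_pos]
  calc exp (-N * φ i) ≤ exp (-N * s) * exp (-N * φ j) := by
        rw [← exp_add, exp_le_exp]
        nlinarith
    _ ≤ exp (-N * s) * ∑ j, exp (-N * φ j) := by
        gcongr
        exact Finset.single_le_sum (f := fun j => exp (-N * φ j)) (fun j _ => (exp_pos _).le)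
          (Finset.mem_univ j)

lemma softMinWeight_le_one {i : ι} : softMinWeight N φ i ≤ 1 := by
  have : Nonempty ι := ⟨i⟩
  rw [← sum_softMinWeight (N := N) (φ := φ)]
  exact Finset.single_le_sum (fun j _ => softMinWeight_nonneg j) (Finset.mem_univ i)

lemma continuousOn_softMinWeight {X : Type*} [TopologicalSpace X] {f : ι → X → ℝ} {U : Set X}
    (hf : ∀ i, ContinuousOn (f i) U) (i : ι) :
    ContinuousOn (fun x => softMinWeight N (fun j => f j x) i) U := by
  have : Nonempty ι := ⟨i⟩
  refine ContinuousOn.div ?_ (by fun_prop) fun x _ => sum_exp_pos.ne'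
  have := hf i
  fun_prop

lemma hasDerivAt_softMinWeight {f : ι → ℝ → ℝ} {f' : ι → ℝ} {t : ℝ}
    (hf : ∀ i, HasDerivAt (f i) (f' i) t) (i : ι) :
    HasDerivAt (fun x => softMinWeight N (fun j => f j x) i)
      (-N * softMinWeight N (fun j => f j t) i *
        (f' i - ∑ j, softMinWeight N (fun j => f j t) j * f' j)) t := by
  have : Nonempty ι := ⟨i⟩
  have hexp : ∀ j, HasDerivAt (fun x => exp (-N * f j x)) (exp (-N * f j t) * (-N * f' j)) t :=
    fun j => ((hf j).const_mul (-N)).exp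
  have hpos := (sum_exp_pos (N := N) (φ := fun j => f j t)).ne'
  have hsum : HasDerivAt (fun x => ∑ j, exp (-N * f j x)) (∑ j, exp (-N * f j t) * (-N * f' j)) t :=
    HasDerivAt.fun_sum fun j _ => hexp j
  refine ((hexp i).div hsum hpos).congr_deriv ?_
  have hpull : ∑ j, exp (-N * f j t) * (-N * f' j) = -N * ∑ j, exp (-N * f j t) * f' j := by
    rw [Finset.mul_sum]
    exact Finset.sum_congr rfl fun j _ => by ring
  simp only [softMinWeight, div_mul_eq_mul_div, ← Finset.sum_div, hpull]
  field_simp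
  ring

lemma weighted_covariance_eq {w : ι → ℝ} (hw : ∑ i, w i = 1) (x y : ι → ℝ) :
    ∑ i, w i * (x i * y i) - (∑ i, w i * x i) * ∑ i, w i * y i =
      1 / 2 * ∑ i, ∑ j, w i * w j * ((x i - x j) * (y i - y j)) := by
  have hexpand : ∀ i j, w i * w j * ((x i - x j) * (y i - y j)) =
      w i * (x i * y i) * w j + w i * (w j * (x j * y j)) - w i * x i * (w j * y j) -
        w i * y i * (w j * x j) := fun i j => by ring
  simp only [hexpand, Finset.sum_add_distrib, Finset.sum_sub_distrib, ← Finset.mul_sum,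
    ← Finset.sum_mul, hw]
  ring

lemma sq_weighted_sum_le {w : ι → ℝ} (hw0 : ∀ i, 0 ≤ w i) (hw : ∑ i, w i = 1) (x : ι → ℝ) :
    (∑ i, w i * x i) ^ 2 ≤ ∑ i, w i * x i ^ 2 := by
  have hvar : 0 ≤ ∑ i, ∑ j, w i * w j * ((x i - x j) * (x i - x j)) :=
    Finset.sum_nonneg fun i _ => Finset.sum_nonneg fun j _ =>
      mul_nonneg (mul_nonneg (hw0 i) (hw0 j)) (mul_self_nonneg _)
  have := weighted_covariance_eq hw x x
  simp only [sq]
  linarith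

end SoftMin

section RiccatiInequality

lemma integrable_mul_of_tsupport_subset {X : Type*} [TopologicalSpace X] [MeasurableSpace X]
    [OpensMeasurableSpace X] {μ : Measure X} [IsFiniteMeasureOnCompacts μ] {v P : X → ℝ} {U : Set X}
    (hU : IsOpen U) (hv : Continuous v) (hcs : HasCompactSupport v) (hvU : tsupport v ⊆ U)
    (hP : ContinuousOn P U) : Integrable (fun z => v z * P z) μ := by
  have hcont : Continuous fun z => v z * P z := continuous_of_tsupport fun z hz =>
    hv.continuousAt.mul (hP.continuousAt (hU.mem_nhds (hvU (tsupport_mul_subset_left hz))))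
  exact hcont.integrable_of_hasCompactSupport hcs.mul_right

variable {E κ : Type*} [NormedAddCommGroup E] [NormedSpace ℝ E] [MeasurableSpace E] [BorelSpace E]
  {μ : Measure E} {v : E → ℝ} {U : Set E}

lemma integrable_fderiv_apply_sq [IsFiniteMeasureOnCompacts μ] (hv : ContDiff ℝ 1 v)
    (hcs : HasCompactSupport v) (e : E) : Integrable (fun z => fderiv ℝ v z e ^ 2) μ := by
  have hcont : Continuous fun z => fderiv ℝ v z e :=
    (hv.continuous_fderiv one_ne_zero).clm_apply continuous_const
  have hcs' : HasCompactSupport fun z => fderiv ℝ v z e := hcs.fderiv_apply ℝ e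
  simp only [sq]
  exact (hcont.mul hcont).integrable_of_hasCompactSupport hcs'.mul_right

variable [FiniteDimensional ℝ E] [μ.IsAddHaarMeasure]

lemma integral_two_mul_fderiv_mul_add_eq_zero {P P' : E → ℝ} {e : E} (hU : IsOpen U)
    (hv : ContDiff ℝ 1 v) (hcs : HasCompactSupport v) (hvU : tsupport v ⊆ U)
    (hP : ContinuousOn P U) (hP' : ContinuousOn P' U)
    (hderiv : ∀ z ∈ U, HasLineDerivAt ℝ P (P' z) z e) :
    ∫ z, v z * (2 * fderiv ℝ v z e * P z + v z * P' z) ∂μ = 0 := by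
  have hv0 := hv.continuous
  have : Continuous fun z => fderiv ℝ v z e :=
    (hv.continuous_fderiv one_ne_zero).clm_apply continuous_const
  have hint : ∀ {Q : E → ℝ}, ContinuousOn Q U → Integrable (fun z => v z * Q z) μ :=
    integrable_mul_of_tsupport_subset hU hv0 hcs hvU
  have hsq : ∀ z, HasLineDerivAt ℝ (fun z => v z * v z) (v z * (2 * fderiv ℝ v z e)) z e := by
    intro z
    have hz := (hv.differentiable one_ne_zero z).hasFDerivAt
    have hline := (hz.mul hz).hasLineDerivAt e
    rwa [add_apply, smul_apply, smul_eq_mul, ← two_mul, mul_left_comm] at hline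
  have hsq_left : Integrable (fun z => v z * (2 * fderiv ℝ v z e) * P z) μ := by
    simpa only [mul_assoc] using hint (Q := fun z => 2 * (fderiv ℝ v z e * P z)) (by fun_prop)
  have hsq_right : Integrable (fun z => v z * v z * P' z) μ := by
    simpa only [mul_assoc] using hint (Q := fun z => v z * P' z) (by fun_prop)
  have hparts := integral_bilinear_hasLineDerivAt_right_eq_neg_left_of_integrable (μ := μ)
    (B := ContinuousLinearMap.mul ℝ ℝ) hsq_left hsq_right
    (by simpa [mul_assoc] using hint (Q := fun z => v z * P z) (by fun_prop))
    (fun z _ => hsq z) (fun z hz => hderiv z (hvU (tsupport_mul_subset_left hz)))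
  simp only [ContinuousLinearMap.mul_apply'] at hparts
  calc ∫ z, v z * (2 * fderiv ℝ v z e * P z + v z * P' z) ∂μ
      = ∫ z, (v z * (2 * fderiv ℝ v z e) * P z + v z * v z * P' z) ∂μ := by
        congr 1 with z
        ring
    _ = 0 := by rw [integral_add hsq_left hsq_right, hparts, add_neg_cancel]

variable [Fintype κ]

lemma integral_mul_sq_le_integral_sum_fderiv_sq {P P' : κ → E → ℝ} {w : E → ℝ} {e : κ → E}
    (hU : IsOpen U) (hv : ContDiff ℝ 1 v) (hcs : HasCompactSupport v) (hvU : tsupport v ⊆ U)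
    (hP : ∀ k, ContinuousOn (P k) U) (hP' : ∀ k, ContinuousOn (P' k) U)
    (hderiv : ∀ k, ∀ z ∈ U, HasLineDerivAt ℝ (P k) (P' k z) z (e k)) (hw : ContinuousOn w U)
    (hle : ∀ z ∈ tsupport v, w z ≤ -∑ k, (P' k z + P k z ^ 2)) :
    ∫ z, w z * v z ^ 2 ∂μ ≤ ∫ z, ∑ k, fderiv ℝ v z (e k) ^ 2 ∂μ := by
  have hv0 := hv.continuous
  have : ∀ k, Continuous fun z => fderiv ℝ v z (e k) := fun k =>
    (hv.continuous_fderiv one_ne_zero).clm_apply continuous_const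
  have hint : ∀ {Q : E → ℝ}, ContinuousOn Q U → Integrable (fun z => v z * Q z) μ :=
    integrable_mul_of_tsupport_subset hU hv0 hcs hvU
  have hint_parts : ∀ k, Integrable
      (fun z => v z * (2 * fderiv ℝ v z (e k) * P k z + v z * P' k z)) μ := fun k => by
    have := hP k
    have := hP' k
    exact hint (by fun_prop)
  have hint_w : Integrable (fun z => w z * v z ^ 2) μ :=
    (hint (Q := fun z => w z * v z) (by fun_prop)).congr (.of_forall fun z => by ring)
  have hzero : ∫ z, ∑ k, v z * (2 * fderiv ℝ v z (e k) * P k z + v z * P' k z) ∂μ = 0 := by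
    rw [integral_finsetSum _ fun k _ => hint_parts k]
    exact Finset.sum_eq_zero fun k _ =>
      integral_two_mul_fderiv_mul_add_eq_zero hU hv hcs hvU (hP k) (hP' k) (hderiv k)
  rw [← add_zero (∫ z, w z * v z ^ 2 ∂μ), ← hzero,
    ← integral_add hint_w (integrable_finsetSum _ fun k _ => hint_parts k)]
  refine integral_mono (hint_w.add (integrable_finsetSum _ fun k _ => hint_parts k))
    (integrable_finsetSum _ fun k _ => integrable_fderiv_apply_sq hv hcs (e k)) fun z => ?_
  have hsq : 0 ≤ ∑ k, (fderiv ℝ v z (e k) - v z * P k z) ^ 2 :=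
    Finset.sum_nonneg fun k _ => sq_nonneg _
  have hw_le : w z * v z ^ 2 ≤ -(∑ k, (P' k z + P k z ^ 2)) * v z ^ 2 := by
    by_cases hz : z ∈ tsupport v
    · gcongr
      exact hle z hz
    · simp [image_eq_zero_of_notMem_tsupport hz]
  have hexpand : ∑ k, fderiv ℝ v z (e k) ^ 2 = ∑ k, (fderiv ℝ v z (e k) - v z * P k z) ^ 2 +
      (-(∑ k, (P' k z + P k z ^ 2)) * v z ^ 2 +
        ∑ k, v z * (2 * fderiv ℝ v z (e k) * P k z + v z * P' k z)) := by
    rw [neg_mul, Finset.sum_mul, ← Finset.sum_neg_distrib, ← Finset.sum_add_distrib,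
      ← Finset.sum_add_distrib]
    exact Finset.sum_congr rfl fun k _ => by ring
  simp only [hexpand]
  linarith

end RiccatiInequality

section Mixing

variable {E ι κ : Type*} [NormedAddCommGroup E] [NormedSpace ℝ E] [Fintype κ] {e : κ → E}
  {U : Set E} {c : ℝ}

/-- A function `dist` and a vector field with components `field k` along the directions `e k` whose
Riccati inequality `c / dist² ≤ -div field - |field|²` yields the Hardy inequality with weight
`c / dist²` on `U`. Only the partial derivatives that enter the divergence are recorded. -/
structure HardyPair (e : κ → E) (U : Set E) (c : ℝ) where
  dist : E → ℝ
  dist' : κ → E → ℝ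
  field : κ → E → ℝ
  field' : κ → E → ℝ
  continuousOn_dist : ContinuousOn dist U
  continuousOn_dist' : ∀ k, ContinuousOn (dist' k) U
  continuousOn_field : ∀ k, ContinuousOn (field k) U
  continuousOn_field' : ∀ k, ContinuousOn (field' k) U
  hasLineDerivAt_dist : ∀ k, ∀ z ∈ U, HasLineDerivAt ℝ dist (dist' k z) z (e k)
  hasLineDerivAt_field : ∀ k, ∀ z ∈ U, HasLineDerivAt ℝ (field k) (field' k z) z (e k)
  dist_pos : ∀ z ∈ U, 0 < dist z
  riccati : ∀ z ∈ U, c / dist z ^ 2 ≤ -∑ k, (field' k z + field k z ^ 2)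

namespace HardyPair

/-- Up to a positive factor, the jump of the normal component of the field across the set
`{p.dist = q.dist}` when one passes from `q` to `p`. -/
noncomputable def jump (p q : HardyPair e U c) (z : E) : ℝ :=
  ∑ k, (p.field k z - q.field k z) * (p.dist' k z - q.dist' k z)

lemma jump_comm (p q : HardyPair e U c) (z : E) : p.jump q z = q.jump p z :=
  Finset.sum_congr rfl fun k _ => by ring

lemma continuousOn_jump (p q : HardyPair e U c) : ContinuousOn (p.jump q) U :=
  continuousOn_finsetSum _ fun k _ =>
    ((p.continuousOn_field k).sub (q.continuousOn_field k)).mul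
      ((p.continuousOn_dist' k).sub (q.continuousOn_dist' k))

lemma exists_forall_abs_jump_le [Finite ι] (p : ι → HardyPair e U c) {K : Set E}
    (hK : IsCompact K) (hKU : K ⊆ U) : ∃ C, ∀ z ∈ K, ∀ i j, |(p i).jump (p j) z| ≤ C := by
  cases nonempty_fintype ι
  have hcont : ContinuousOn (fun z i j => (p i).jump (p j) z) K :=
    continuousOn_pi.2 fun i => continuousOn_pi.2 fun j =>
      (continuousOn_jump (p i) (p j)).mono hKU
  obtain ⟨C, hC⟩ := hK.exists_bound_of_continuousOn hcont
  refine ⟨C, fun z hz i j => le_trans ?_ (hC z hz)⟩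
  calc |(p i).jump (p j) z| ≤ ‖fun j => (p i).jump (p j) z‖ :=
        norm_le_pi_norm (fun j => (p i).jump (p j) z) j
    _ ≤ ‖fun i j => (p i).jump (p j) z‖ := norm_le_pi_norm (fun i j => (p i).jump (p j) z) i

/-- The soft-min weights of a family of pairs. Lowering each distance by `s` times its priority
breaks ties in favour of the higher priority. -/
noncomputable def weight [Fintype ι] (p : ι → HardyPair e U c) (prio : ι → ℕ) (N s : ℝ) (i : ι)
    (z : E) : ℝ :=
  softMinWeight N (fun j => (p j).dist z - s * prio j) i

/-- The mixture of the fields of a family of pairs by their soft-min weights. -/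
noncomputable def mixedField [Fintype ι] (p : ι → HardyPair e U c) (prio : ι → ℕ) (N s : ℝ) (k : κ)
    (z : E) : ℝ :=
  ∑ i, weight p prio N s i z * (p i).field k z

/-- The partial derivatives of `mixedField`. -/
noncomputable def mixedField' [Fintype ι] (p : ι → HardyPair e U c) (prio : ι → ℕ) (N s : ℝ) (k : κ)
    (z : E) : ℝ :=
  ∑ i, weight p prio N s i z * (p i).field' k z -
    N * (1 / 2 * ∑ i, ∑ j, weight p prio N s i z * weight p prio N s j z *
      (((p i).field k z - (p j).field k z) * ((p i).dist' k z - (p j).dist' k z)))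

variable [Fintype ι] {p : ι → HardyPair e U c} {prio : ι → ℕ} {N s : ℝ}

lemma weight_nonneg (i : ι) (z : E) : 0 ≤ weight p prio N s i z := softMinWeight_nonneg i

lemma sum_weight [Nonempty ι] (z : E) : ∑ i, weight p prio N s i z = 1 := sum_softMinWeight

lemma continuousOn_weight (i : ι) : ContinuousOn (weight p prio N s i) U :=
  continuousOn_softMinWeight (fun j => (p j).continuousOn_dist.sub continuousOn_const) i

lemma continuousOn_mixedField (k : κ) : ContinuousOn (mixedField p prio N s k) U :=
  continuousOn_finsetSum _ fun i _ => (continuousOn_weight i).mul ((p i).continuousOn_field k)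

lemma continuousOn_mixedField' (k : κ) : ContinuousOn (mixedField' p prio N s k) U := by
  refine (continuousOn_finsetSum _ fun i _ => (continuousOn_weight i).mul
    ((p i).continuousOn_field' k)).sub (continuousOn_const.mul (continuousOn_const.mul
      (continuousOn_finsetSum _ fun i _ => continuousOn_finsetSum _ fun j _ => ?_)))
  exact ((continuousOn_weight i).mul (continuousOn_weight j)).mul
    (((p i).continuousOn_field k |>.sub ((p j).continuousOn_field k)).mul
      (((p i).continuousOn_dist' k).sub ((p j).continuousOn_dist' k)))

lemma hasLineDerivAt_mixedField [Nonempty ι] (k : κ) {z : E} (hz : z ∈ U) :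
    HasLineDerivAt ℝ (mixedField p prio N s k) (mixedField' p prio N s k z) z (e k) := by
  have hdist : ∀ i, HasDerivAt (fun t : ℝ => (p i).dist (z + t • e k) - s * prio i)
      ((p i).dist' k z) 0 := fun i =>
    HasDerivAt.sub_const _ ((p i).hasLineDerivAt_dist k z hz)
  have hfield : ∀ i, HasDerivAt (fun t : ℝ => (p i).field k (z + t • e k)) ((p i).field' k z) 0 :=
    fun i => (p i).hasLineDerivAt_field k z hz
  refine (HasDerivAt.fun_sum fun i _ =>
    (hasDerivAt_softMinWeight hdist i).mul (hfield i)).congr_deriv ?_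
  have hcov := weighted_covariance_eq (sum_weight (p := p) (prio := prio) (N := N) (s := s) z)
    (fun i => (p i).field k z) (fun i => (p i).dist' k z)
  rw [mixedField', ← hcov, Finset.sum_mul, ← Finset.sum_sub_distrib, Finset.mul_sum,
    ← Finset.sum_sub_distrib]
  refine Finset.sum_congr rfl fun i _ => ?_
  simp only [zero_smul, add_zero, weight]
  ring

lemma sum_mixedField'_add_sq_le [Nonempty ι] (z : E) :
    ∑ k, (mixedField' p prio N s k z + mixedField p prio N s k z ^ 2) ≤
      ∑ i, weight p prio N s i z * ∑ k, ((p i).field' k z + (p i).field k z ^ 2) -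
        N * (1 / 2 * ∑ i, ∑ j, weight p prio N s i z * weight p prio N s j z *
          (p i).jump (p j) z) := by
  have hjump : ∑ i, ∑ j, weight p prio N s i z * weight p prio N s j z * (p i).jump (p j) z =
      ∑ k, ∑ i, ∑ j, weight p prio N s i z * weight p prio N s j z *
        (((p i).field k z - (p j).field k z) * ((p i).dist' k z - (p j).dist' k z)) := by
    simp only [jump, Finset.mul_sum]
    rw [Finset.sum_comm_cycle]
  have hfield : ∑ i, weight p prio N s i z * ∑ k, ((p i).field' k z + (p i).field k z ^ 2) =
      ∑ k, (∑ i, weight p prio N s i z * (p i).field' k z +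
        ∑ i, weight p prio N s i z * (p i).field k z ^ 2) := by
    simp only [Finset.mul_sum, ← Finset.sum_add_distrib, ← mul_add]
    exact Finset.sum_comm
  rw [hjump, hfield, Finset.mul_sum, Finset.mul_sum, ← Finset.sum_sub_distrib]
  refine Finset.sum_le_sum fun k _ => ?_
  have := sq_weighted_sum_le (fun i => weight_nonneg (p := p) (prio := prio) (N := N) (s := s) i z)
    (sum_weight z) fun i => (p i).field k z
  rw [mixedField', mixedField]
  linarith

lemma le_sum_weight_div_dist_sq {d ρ b : ℝ} (hN : 0 ≤ N) (hs : 0 ≤ s) (hρ : 0 < ρ) (hρd : ρ ≤ d)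
    (hb : ∀ i, (prio i : ℝ) ≤ b) {z : E} (hz : z ∈ U) (hd : ∃ j, (p j).dist z ≤ d) :
    1 / (1 + s * (b + 1) / ρ) ^ 2 / d ^ 2 - Fintype.card ι * exp (-N * s) / ρ ^ 2 ≤
      ∑ i, weight p prio N s i z / (p i).dist z ^ 2 := by
  obtain ⟨j, hj⟩ := hd
  have : Nonempty ι := ⟨j⟩
  have hb0 : 0 ≤ b := (Nat.cast_nonneg _).trans (hb j)
  have hd0 : 0 < d := hρ.trans_le hρd
  have hterm : ∀ i, (weight p prio N s i z - exp (-N * s)) / (d + s * (b + 1)) ^ 2 ≤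
      weight p prio N s i z / (p i).dist z ^ 2 := by
    intro i
    have hpos := (p i).dist_pos z hz
    have hw := weight_nonneg (p := p) (prio := prio) (N := N) (s := s) i z
    rcases le_or_gt ((p i).dist z) (d + s * (b + 1)) with hnear | hfar
    · gcongr
      linarith [exp_pos (-N * s)]
    · have hsmall : weight p prio N s i z ≤ exp (-N * s) :=
        softMinWeight_le_exp (j := j) hN
          (by nlinarith [mul_le_mul_of_nonneg_left (hb i) hs, (prio j).cast_nonneg (α := ℝ)])
      exact (div_nonpos_of_nonpos_of_nonneg (by linarith) (sq_nonneg _)).trans (by positivity)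
  have hscale : d + s * (b + 1) ≤ (1 + s * (b + 1) / ρ) * d := by
    rw [add_mul, one_mul, div_mul_eq_mul_div, add_le_add_iff_left, le_div_iff₀ hρ]
    gcongr
  have hmain : 1 / (1 + s * (b + 1) / ρ) ^ 2 / d ^ 2 ≤ 1 / (d + s * (b + 1)) ^ 2 := by
    rw [div_div, ← mul_pow]
    gcongr
  have herror : Fintype.card ι * exp (-N * s) / (d + s * (b + 1)) ^ 2 ≤
      Fintype.card ι * exp (-N * s) / ρ ^ 2 := by
    gcongr
    linarith [mul_nonneg hs (by linarith : 0 ≤ b + 1)]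
  calc _ ≤ (1 - Fintype.card ι * exp (-N * s)) / (d + s * (b + 1)) ^ 2 := by
        rw [sub_div]
        linarith
    _ = ∑ i, (weight p prio N s i z - exp (-N * s)) / (d + s * (b + 1)) ^ 2 := by
        rw [← Finset.sum_div, Finset.sum_sub_distrib, sum_weight]
        simp
    _ ≤ _ := Finset.sum_le_sum fun i _ => hterm i

/-- The jumps of a family of pairs have the favorable sign: wherever the distance of a pair of at
least the same priority is the larger one. -/
def HasFavorableJumps (p : ι → HardyPair e U c) (prio : ι → ℕ) : Prop :=
  ∀ i j, prio j ≤ prio i → ∀ z ∈ U, (p j).dist z ≤ (p i).dist z → 0 ≤ (p i).jump (p j) z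

lemma HasFavorableJumps.neg_le_weight_mul_jump (hp : HasFavorableJumps p prio) (hN : 0 ≤ N)
    (hs : 0 ≤ s) {C : ℝ} {z : E} (hz : z ∈ U) (i j : ι) (hC : |(p i).jump (p j) z| ≤ C) :
    -(C * exp (-N * s)) ≤ weight p prio N s i z * weight p prio N s j z * (p i).jump (p j) z := by
  wlog hij : prio j ≤ prio i generalizing i j
  · have := this j i (by rwa [jump_comm]) (le_of_not_ge hij)
    rwa [jump_comm, mul_comm (weight p prio N s j z)] at this
  have hwi := weight_nonneg (p := p) (prio := prio) (N := N) (s := s) i z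
  have hwj := weight_nonneg (p := p) (prio := prio) (N := N) (s := s) j z
  have hC0 : 0 ≤ C := (abs_nonneg _).trans hC
  have hneg : -C ≤ (p i).jump (p j) z := (abs_le.1 hC).1
  rcases le_or_gt 0 ((p i).jump (p j) z) with hJ | hJ
  · have : 0 ≤ C * exp (-N * s) := by positivity
    exact (neg_nonpos.2 this).trans (by positivity)
  have hdist : (p i).dist z < (p j).dist z := not_le.1 fun h => (hp i j hij z hz h).not_gt hJ
  have hprio : (prio j : ℝ) + 1 ≤ prio i := by
    rcases hij.lt_or_eq with h | h
    · exact_mod_cast h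
    · exact absurd (hp j i h.ge z hz hdist.le) (by rw [jump_comm]; exact hJ.not_ge)
  have hsmall : weight p prio N s j z ≤ exp (-N * s) :=
    softMinWeight_le_exp (j := i) hN (by nlinarith [mul_le_mul_of_nonneg_left hprio hs])
  have hw : weight p prio N s i z * weight p prio N s j z ≤ exp (-N * s) :=
    (mul_le_of_le_one_left hwj softMinWeight_le_one).trans hsmall
  nlinarith [mul_nonneg hwi hwj]

lemma HasFavorableJumps.le_neg_sum_mixedField (hp : HasFavorableJumps p prio) (hc : 0 ≤ c)
    (hN : 0 ≤ N) (hs : 0 ≤ s) {d ρ b C : ℝ} (hρ : 0 < ρ) (hρd : ρ ≤ d)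
    (hb : ∀ i, (prio i : ℝ) ≤ b) {z : E} (hz : z ∈ U) (hd : ∃ j, (p j).dist z ≤ d)
    (hC : ∀ i j, |(p i).jump (p j) z| ≤ C) :
    c * (1 / (1 + s * (b + 1) / ρ) ^ 2 / d ^ 2 - Fintype.card ι * exp (-N * s) / ρ ^ 2) -
        N * (1 / 2 * (Fintype.card ι ^ 2 * (C * exp (-N * s)))) ≤
      -∑ k, (mixedField' p prio N s k z + mixedField p prio N s k z ^ 2) := by
  have : Nonempty ι := ⟨hd.choose⟩
  have hdist := mul_le_mul_of_nonneg_left (le_sum_weight_div_dist_sq hN hs hρ hρd hb hz hd) hc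
  have hriccati : c * ∑ i, weight p prio N s i z / (p i).dist z ^ 2 ≤
      -∑ i, weight p prio N s i z * ∑ k, ((p i).field' k z + (p i).field k z ^ 2) := by
    rw [Finset.mul_sum, ← Finset.sum_neg_distrib]
    refine Finset.sum_le_sum fun i _ => ?_
    have := mul_le_mul_of_nonneg_left ((p i).riccati z hz)
      (weight_nonneg (p := p) (prio := prio) (N := N) (s := s) i z)
    rw [mul_div_left_comm, ← mul_neg]
    exact this
  have hjump : -(Fintype.card ι ^ 2 * (C * exp (-N * s))) ≤ ∑ i, ∑ j,
      weight p prio N s i z * weight p prio N s j z * (p i).jump (p j) z := by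
    calc -(Fintype.card ι ^ 2 * (C * exp (-N * s)))
        = ∑ _i : ι, ∑ _j : ι, -(C * exp (-N * s)) := by
          simp only [Finset.sum_const, Finset.card_univ, nsmul_eq_mul]
          ring
      _ ≤ _ := Finset.sum_le_sum fun i _ => Finset.sum_le_sum fun j _ =>
          hp.neg_le_weight_mul_jump hN hs hz i j (hC i j)
  have := sum_mixedField'_add_sq_le (p := p) (prio := prio) (N := N) (s := s) z
  nlinarith

variable [MeasurableSpace E] [BorelSpace E] [FiniteDimensional ℝ E] {μ : Measure E}
  [μ.IsAddHaarMeasure] {v d : E → ℝ}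

lemma HasFavorableJumps.mul_integral_sub_le (hp : HasFavorableJumps p prio) (hU : IsOpen U)
    (hc : 0 ≤ c) (hN : 0 ≤ N) (hs : 0 ≤ s) {ρ b C : ℝ} (hρ : 0 < ρ)
    (hb : ∀ i, (prio i : ℝ) ≤ b) (hv : ContDiff ℝ 1 v) (hcs : HasCompactSupport v)
    (hvU : tsupport v ⊆ U) (hd : ContinuousOn d U) (hd0 : ∀ z ∈ U, 0 < d z)
    (hρd : ∀ z ∈ tsupport v, ρ ≤ d z) (hpd : ∀ z ∈ U, ∃ i, (p i).dist z ≤ d z)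
    (hC : ∀ z ∈ tsupport v, ∀ i j, |(p i).jump (p j) z| ≤ C) :
    c * (1 / (1 + s * (b + 1) / ρ) ^ 2) * ∫ z, v z ^ 2 / d z ^ 2 ∂μ -
        (c * (Fintype.card ι * exp (-N * s) / ρ ^ 2) +
          N * (1 / 2 * (Fintype.card ι ^ 2 * (C * exp (-N * s))))) * ∫ z, v z ^ 2 ∂μ ≤
      ∫ z, ∑ k, fderiv ℝ v z (e k) ^ 2 ∂μ := by
  rcases isEmpty_or_nonempty ι with hι | _
  · have hv0 : v = 0 := tsupport_eq_empty_iff.1 <| Set.eq_empty_of_forall_notMem fun z hz =>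
      hι.elim (hpd z (hvU hz)).choose
    simp [hv0]
  set A := c * (1 / (1 + s * (b + 1) / ρ) ^ 2)
  set B := c * (Fintype.card ι * exp (-N * s) / ρ ^ 2) +
    N * (1 / 2 * (Fintype.card ι ^ 2 * (C * exp (-N * s))))
  have hinv : ContinuousOn (fun z => 1 / d z ^ 2) U :=
    continuousOn_const.div (hd.pow 2) fun z hz => (pow_pos (hd0 z hz) 2).ne'
  have hv0 := hv.continuous
  have hint : ∀ {Q : E → ℝ}, ContinuousOn Q U → Integrable (fun z => v z * Q z) μ :=
    integrable_mul_of_tsupport_subset hU hv0 hcs hvU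
  have hint_dist : Integrable (fun z => v z ^ 2 / d z ^ 2) μ :=
    (hint (Q := fun z => v z * (1 / d z ^ 2)) (by fun_prop)).congr (.of_forall fun z => by ring)
  have hint_sq : Integrable (fun z => v z ^ 2) μ :=
    (hint (Q := v) (by fun_prop)).congr (.of_forall fun z => by ring)
  calc A * ∫ z, v z ^ 2 / d z ^ 2 ∂μ - B * ∫ z, v z ^ 2 ∂μ
      = ∫ z, (A * (1 / d z ^ 2) - B) * v z ^ 2 ∂μ := by
        rw [← integral_const_mul, ← integral_const_mul,
          ← integral_sub (hint_dist.const_mul A) (hint_sq.const_mul B)]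
        congr 1 with z
        ring
    _ ≤ ∫ z, ∑ k, fderiv ℝ v z (e k) ^ 2 ∂μ := by
        refine integral_mul_sq_le_integral_sum_fderiv_sq hU hv hcs hvU continuousOn_mixedField
          continuousOn_mixedField' (fun k z hz => hasLineDerivAt_mixedField k hz)
          (by fun_prop) fun z hz => (le_of_eq ?_).trans
          (hp.le_neg_sum_mixedField hc hN hs hρ (hρd z hz) hb (hvU hz) (hpd z (hvU hz)) (hC z hz))
        simp only [A, B]
        ring

omit [Fintype ι] in
theorem HasFavorableJumps.hardy_inequality [Finite ι] (hp : HasFavorableJumps p prio)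
    (hU : IsOpen U) (hc : 0 ≤ c) (hd : ContinuousOn d U) (hd0 : ∀ z ∈ U, 0 < d z)
    (hpd : ∀ z ∈ U, ∃ i, (p i).dist z ≤ d z) (hv : ContDiff ℝ 1 v) (hcs : HasCompactSupport v)
    (hvU : tsupport v ⊆ U) :
    c * ∫ z, v z ^ 2 / d z ^ 2 ∂μ ≤ ∫ z, ∑ k, fderiv ℝ v z (e k) ^ 2 ∂μ := by
  cases nonempty_fintype ι
  obtain ⟨ρ, hρ, hρd⟩ := hcs.isCompact.exists_forall_le' (hd.mono hvU) fun z hz => hd0 z (hvU hz)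
  obtain ⟨C, hC⟩ := exists_forall_abs_jump_le p hcs.isCompact hvU
  have hb : ∀ i, (prio i : ℝ) ≤ (∑ i, prio i : ℕ) := fun i => by
    exact_mod_cast Finset.single_le_sum (fun j _ => Nat.zero_le _) (Finset.mem_univ i)
  have hexp := tendsto_exp_neg_atTop_nhds_zero
  have hsq_exp := tendsto_pow_mul_exp_neg_atTop_nhds_zero 2
  have hshift : Filter.Tendsto (fun x : ℝ => x⁻¹) Filter.atTop (nhds 0) := tendsto_inv_atTop_zero
  -- Let the inverse temperature `N = x ^ 2` grow while the tie-breaking shift `s = x⁻¹` shrinks.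
  have hlimit := ((((((hshift.mul_const ((∑ i, prio i : ℕ) + 1 : ℝ)).div_const ρ).const_add 1).pow
    2).inv₀ (by norm_num)).const_mul c).mul_const (∫ z, v z ^ 2 / d z ^ 2 ∂μ) |>.sub
    (((hexp.const_mul (c * Fintype.card ι / ρ ^ 2)).add
      (hsq_exp.const_mul (1 / 2 * Fintype.card ι ^ 2 * C))).mul_const (∫ z, v z ^ 2 ∂μ))
  simp only [zero_mul, zero_div, add_zero, one_pow, inv_one, mul_one, mul_zero, sub_zero] at hlimit
  refine le_of_tendsto hlimit ?_
  filter_upwards [Filter.eventually_gt_atTop 0] with x hx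
  have := hp.mul_integral_sub_le (μ := μ) (N := x ^ 2) (s := x⁻¹) hU hc (sq_nonneg x)
    (inv_nonneg.2 hx.le) hρ hb hv hcs hvU hd hd0 hρd hpd hC
  have hNs : -x ^ 2 * x⁻¹ = -x := by field_simp
  rw [hNs, one_div ((1 + _) ^ 2)] at this
  refine (le_of_eq ?_).trans this
  ring

end HardyPair

end Mixing

section ExcessAngle

variable {κ σ : ℝ}

/-- The signed amount by which the angle `σ` exceeds the interval `[-κ, κ]`. -/
noncomputable def excessAngle (κ σ : ℝ) : ℝ := max (σ - κ) 0 - max (-σ - κ) 0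

lemma excessAngle_of_ge (hκ : 0 ≤ κ) (hσ : κ ≤ σ) : excessAngle κ σ = σ - κ := by
  rw [excessAngle, max_eq_left (by linarith), max_eq_right (by linarith), sub_zero]

lemma excessAngle_of_abs_le (hσ : |σ| ≤ κ) : excessAngle κ σ = 0 := by
  obtain ⟨hleft, hright⟩ := abs_le.1 hσ
  rw [excessAngle, max_eq_right (by linarith), max_eq_right (by linarith), sub_zero]

lemma excessAngle_neg : excessAngle κ (-σ) = -excessAngle κ σ := by
  rw [excessAngle, excessAngle, neg_neg, neg_sub]

lemma excessAngle_of_le (hκ : 0 ≤ κ) (hσ : σ ≤ -κ) : excessAngle κ σ = σ + κ := by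
  rw [← neg_neg σ, excessAngle_neg, excessAngle_of_ge hκ (by linarith)]
  ring

lemma continuous_excessAngle : Continuous (excessAngle κ) := by
  unfold excessAngle
  fun_prop

lemma cos_excessAngle_pos (hσ : |σ| < π / 2 + κ) : 0 < cos (excessAngle κ σ) := by
  obtain ⟨hleft, hright⟩ := abs_lt.1 hσ
  refine cos_pos_of_mem_Ioo ⟨?_, ?_⟩ <;> rw [excessAngle] <;>
    rcases max_cases (σ - κ) 0 with ⟨h, _⟩ | ⟨h, _⟩ <;>
    rcases max_cases (-σ - κ) 0 with ⟨h', _⟩ | ⟨h', _⟩ <;> linarith [pi_pos]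

lemma hasDerivAt_of_eqOn_Iic_of_eqOn_Ici {f g h : ℝ → ℝ} {f' x : ℝ} (hg : HasDerivAt g f' x)
    (hh : HasDerivAt h f' x) (hfg : EqOn f g (Iic x)) (hfh : EqOn f h (Ici x)) :
    HasDerivAt f f' x := by
  have hunion := (hg.hasDerivWithinAt.congr hfg (hfg self_mem_Iic)).union
    (hh.hasDerivWithinAt.congr hfh (hfh self_mem_Ici))
  rwa [Iic_union_Ici, hasDerivWithinAt_univ] at hunion

lemma hasDerivAt_cos_max_zero (x : ℝ) :
    HasDerivAt (fun x => cos (max x 0)) (-sin (max x 0)) x := by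
  rcases lt_trichotomy x 0 with hx | rfl | hx
  · rw [max_eq_right hx.le, sin_zero, neg_zero]
    refine (hasDerivAt_const x 1).congr_of_eventuallyEq ?_
    filter_upwards [Iio_mem_nhds hx] with y hy
    rw [max_eq_right (le_of_lt hy), cos_zero]
  · rw [max_self, sin_zero, neg_zero]
    refine hasDerivAt_of_eqOn_Iic_of_eqOn_Ici (hasDerivAt_const 0 1) (h := cos)
      (by simpa using hasDerivAt_cos 0) (fun y hy => ?_) fun y hy => ?_
    · simp [max_eq_right (mem_Iic.1 hy)]
    · simp [max_eq_left (mem_Ici.1 hy)]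
  · rw [max_eq_left hx.le]
    refine (hasDerivAt_cos x).congr_of_eventuallyEq ?_
    filter_upwards [Ioi_mem_nhds hx] with y hy
    rw [max_eq_left (le_of_lt hy)]

lemma hasDerivAt_cos_excessAngle (hκ : 0 ≤ κ) (σ : ℝ) :
    HasDerivAt (fun σ => cos (excessAngle κ σ)) (-sin (excessAngle κ σ)) σ := by
  have hsin : ∀ σ, sin (max (σ - κ) 0) * sin (max (-σ - κ) 0) = 0 := fun σ => by
    rcases le_total σ κ with h | h
    · simp [max_eq_right (sub_nonpos.2 h)]
    · simp [max_eq_right (show -σ - κ ≤ 0 by linarith)]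
  have hcos : (fun σ => cos (excessAngle κ σ)) =
      fun σ => cos (max (σ - κ) 0) * cos (max (-σ - κ) 0) := by
    ext σ
    rw [excessAngle, cos_sub, hsin, add_zero]
  have hright := (hasDerivAt_cos_max_zero (σ - κ)).comp σ ((hasDerivAt_id σ).sub_const κ)
  have hleft := (hasDerivAt_cos_max_zero (-σ - κ)).comp σ ((hasDerivAt_neg σ).sub_const κ)
  rw [hcos]
  refine (hright.mul hleft).congr_deriv ?_
  simp only [Function.comp, id, excessAngle, sin_sub]
  ring

end ExcessAngle

namespace AngularProfile

variable {κ α σ : ℝ} (p : AngularProfile κ α)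

/-- The extension of the slope, shifted by `κ`, to the central sector. -/
noncomputable def halfSlope (σ : ℝ) : ℝ :=
  if σ ≤ κ then p.freq * tan (p.freq * σ) else p.slope (σ - κ)

/-- The derivative of `halfSlope`. -/
noncomputable def halfSlope' (σ : ℝ) : ℝ :=
  if σ ≤ κ then p.freq ^ 2 + (p.freq * tan (p.freq * σ)) ^ 2 else p.slope' (σ - κ)

/-- The angular coefficient of the field: the odd function that agrees with `-halfSlope` on
`[0, ∞)`. -/
noncomputable def angular (σ : ℝ) : ℝ := if 0 ≤ σ then -p.halfSlope σ else p.halfSlope (-σ)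

/-- The derivative of `angular`. -/
noncomputable def angular' (σ : ℝ) : ℝ := -p.halfSlope' |σ|

lemma hasDerivAt_freq_mul_tan (hσ : |σ| < π / 2) : HasDerivAt (fun σ => p.freq * tan (p.freq * σ))
    (p.freq ^ 2 + (p.freq * tan (p.freq * σ)) ^ 2) σ := by
  have habs : |p.freq * σ| < π / 2 := by
    rw [abs_mul, abs_of_pos p.freq_pos]
    exact (mul_le_of_le_one_left (abs_nonneg σ) p.freq_le_one).trans_lt hσ
  have hcos := (cos_pos_of_mem_Ioo (abs_lt.1 habs)).ne'
  refine (((hasDerivAt_tan hcos).comp σ ((hasDerivAt_id σ).const_mul p.freq)).const_mul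
    p.freq).congr_deriv ?_
  simp only [one_div, ← inv_one_add_tan_sq hcos, inv_inv]
  ring

lemma hasDerivAt_halfSlope (hσ : σ ∈ Ioo (-κ) (π / 2 + κ)) :
    HasDerivAt p.halfSlope (p.halfSlope' σ) σ := by
  obtain ⟨hκ, hκ2⟩ := p.angle_mem
  have hinner : σ ≤ κ → HasDerivAt (fun σ => p.freq * tan (p.freq * σ)) (p.halfSlope' σ) σ :=
    fun h => by
      rw [halfSlope', if_pos h]
      exact p.hasDerivAt_freq_mul_tan (abs_lt.2 ⟨by linarith [hσ.1], by linarith⟩)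
  have houter : κ ≤ σ → HasDerivAt (fun y => p.slope (y - κ)) (p.slope' (σ - κ)) σ := fun h =>
    (p.hasDerivAt_slope _ ⟨by linarith, by linarith [hσ.2]⟩).comp_sub_const σ κ
  rcases lt_trichotomy σ κ with h | rfl | h
  · refine (hinner h.le).congr_of_eventuallyEq ?_
    filter_upwards [Iio_mem_nhds h] with y hy
    exact if_pos (le_of_lt hy)
  · have hmatch : p.slope' (σ - σ) = p.halfSlope' σ := by
      rw [halfSlope', if_pos le_rfl, sub_self, p.slope'_zero, p.slope_zero]
    refine hasDerivAt_of_eqOn_Iic_of_eqOn_Ici (hinner le_rfl) (hmatch ▸ houter le_rfl)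
      (fun y hy => if_pos hy) fun y hy => ?_
    rcases (mem_Ici.1 hy).eq_or_lt with rfl | hy
    · rw [halfSlope, if_pos le_rfl, sub_self, p.slope_zero]
    · exact if_neg hy.not_ge
  · rw [halfSlope', if_neg h.not_ge]
    refine (houter h.le).congr_of_eventuallyEq ?_
    filter_upwards [Ioi_mem_nhds h] with y hy
    exact if_neg (not_le.2 hy)

lemma continuousOn_halfSlope' : ContinuousOn p.halfSlope' (Ioo (-κ) (π / 2 + κ)) := by
  have hκ := p.angle_mem.2
  refine ContinuousOn.if (fun σ hσ => ?_) ?_ ?_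
  · rw [show {σ : ℝ | σ ≤ κ} = Iic κ from rfl, frontier_Iic] at hσ
    rw [mem_singleton_iff.1 hσ.2, sub_self, p.slope'_zero, p.slope_zero]
  · intro σ hσ
    rw [show {σ : ℝ | σ ≤ κ} = Iic κ from rfl, closure_Iic] at hσ
    have := p.hasDerivAt_freq_mul_tan (σ := σ)
      (abs_lt.2 ⟨by linarith [hσ.1.1], by linarith [mem_Iic.1 hσ.2]⟩)
    exact (continuousAt_const.add (this.continuousAt.pow 2)).continuousWithinAt
  · refine p.continuousOn_slope'.comp (by fun_prop) fun σ hσ => ?_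
    have hσκ : κ ≤ σ := by
      simpa only [not_le, show {σ : ℝ | κ < σ} = Ioi κ from rfl, closure_Ioi, mem_Ici] using hσ.2
    exact ⟨by linarith, by linarith [hσ.1.2]⟩

lemma angular_of_neg_le (hσ : -κ ≤ σ) : p.angular σ = -p.halfSlope σ := by
  rcases le_or_gt 0 σ with h | h
  · exact if_pos h
  · rw [angular, if_neg h.not_ge, halfSlope, halfSlope, if_pos (by linarith),
      if_pos (by linarith [p.angle_mem.1]), mul_neg, tan_neg, mul_neg]

lemma angular_neg : p.angular (-σ) = -p.angular σ := by
  rcases lt_trichotomy σ 0 with h | rfl | h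
  · simp [angular, h.le, h.not_ge]
  · simp [angular, halfSlope, p.angle_mem.1.le]
  · simp [angular, h.le, h.not_ge]

lemma angular_of_lt_neg (hσ : σ < -κ) : p.angular σ = p.slope (-σ - κ) := by
  have hκ := p.angle_mem.1
  rw [← neg_neg σ, angular_neg, angular_of_neg_le _ (by linarith), halfSlope,
    if_neg (by linarith), neg_neg, neg_neg]

lemma hasDerivAt_angular (hσ : |σ| < π / 2 + κ) :
    HasDerivAt p.angular (p.angular' σ) σ := by
  have hκ := p.angle_mem.1
  have hnonneg : ∀ {σ}, 0 ≤ σ → |σ| < π / 2 + κ → HasDerivAt p.angular (p.angular' σ) σ := by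
    intro σ h0 hσ
    rw [abs_of_nonneg h0] at hσ
    rw [angular', abs_of_nonneg h0]
    refine (p.hasDerivAt_halfSlope ⟨by linarith, hσ⟩).neg.congr_of_eventuallyEq ?_
    filter_upwards [Ioi_mem_nhds (show -κ < σ by linarith)] with y hy
    exact p.angular_of_neg_le (le_of_lt hy)
  rcases le_or_gt 0 σ with h0 | h0
  · exact hnonneg h0 hσ
  · have hodd : p.angular = fun y => -p.angular (-y) := funext fun y => by
      rw [angular_neg, neg_neg]
    rw [hodd]
    refine ((hnonneg (neg_nonneg.2 h0.le) (by rwa [abs_neg])).comp σ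
      (hasDerivAt_neg σ)).neg.congr_deriv ?_
    rw [angular', angular', abs_neg]
    ring

lemma continuousOn_angular' : ContinuousOn p.angular' {σ | |σ| < π / 2 + κ} :=
  (p.continuousOn_halfSlope'.comp continuous_abs.continuousOn fun σ hσ =>
    ⟨by linarith [abs_nonneg σ, p.angle_mem.1], hσ⟩).neg

lemma angular_riccati (hσ : |σ| < π / 2 + κ) : α * (1 - α) / cos (excessAngle κ σ) ^ 2 ≤
    -p.angular' σ - p.angular σ ^ 2 - p.lam ^ 2 := by
  have hκ := p.angle_mem.1
  wlog h0 : 0 ≤ σ generalizing σ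
  · have := this (σ := -σ) (by rwa [abs_neg]) (by linarith)
    simpa only [excessAngle_neg, cos_neg, angular_neg, angular', abs_neg, neg_sq] using this
  rw [abs_of_nonneg h0] at hσ
  rw [p.angular_of_neg_le (by linarith), angular', abs_of_nonneg h0, halfSlope, halfSlope']
  split_ifs with h
  · rw [excessAngle_of_abs_le (by rwa [abs_of_nonneg h0]), cos_zero, one_pow, div_one]
    linarith [p.lam_sq_add]
  · rw [excessAngle_of_ge hκ.le (by linarith)]
    linarith [p.riccati (σ - κ) ⟨by linarith, by linarith⟩]

lemma jump_center_nonneg {h : ℝ} (hσ : |σ| ≤ κ) (hh : h ∈ Ioo 0 (π / 2)) (hσh : σ ≤ h) :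
    0 ≤ p.lam * sin h - p.freq * tan (p.freq * σ) * cos h + α * sin h := by
  obtain ⟨hκ, hκ2⟩ := p.angle_mem
  have hν := p.freq_pos
  have hν1 := p.freq_le_one
  have hsin : 0 < sin h := sin_pos_of_pos_of_lt_pi hh.1 (by linarith [hh.2])
  have hcos : 0 < cos h := cos_pos_of_mem_Ioo ⟨by linarith [hh.1, pi_pos], hh.2⟩
  have htan : tan (p.freq * σ) ≤ tan h := by
    refine strictMonoOn_tan.monotoneOn ⟨?_, ?_⟩ ⟨by linarith [hh.1, pi_pos], hh.2⟩ ?_ <;>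
      nlinarith [abs_le.1 hσ, hh.1]
  have htan_cos : p.freq * tan (p.freq * σ) * cos h ≤ p.freq * sin h := by
    rw [← tan_mul_cos hcos.ne', mul_assoc]
    gcongr
  have := mul_le_mul_of_nonneg_right p.freq_le_lam_add hsin.le
  linarith

lemma jump_nonneg {ω : ℝ} (hσ : |σ| < π / 2 + κ) (hω : |ω| ∈ Ioo κ (π - κ)) :
    0 ≤ sin ((σ - excessAngle κ σ - ω) / 2) *
      (cos (excessAngle κ σ) *
        (p.lam * sin (excessAngle κ σ + (σ - excessAngle κ σ - ω) / 2) +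
          p.angular σ * cos (excessAngle κ σ + (σ - excessAngle κ σ - ω) / 2)) +
        α * sin ((σ - excessAngle κ σ - ω) / 2)) := by
  have hκ := p.angle_mem.1
  wlog hω0 : ω ≤ 0 generalizing σ ω
  · have := this (σ := -σ) (ω := -ω) (by rwa [abs_neg]) (by rwa [abs_neg]) (by linarith)
    rw [excessAngle_neg, angular_neg,
      show (-σ - -excessAngle κ σ - -ω) / 2 = -((σ - excessAngle κ σ - ω) / 2) by ring,
      ← neg_add, cos_neg, cos_neg, sin_neg, sin_neg] at this
    linarith
  rw [abs_of_nonpos hω0] at hω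
  obtain ⟨hωκ, hωπ⟩ := hω
  rw [abs_lt] at hσ
  rcases lt_or_ge κ σ with h₁ | h₁
  · rw [excessAngle_of_ge hκ.le h₁.le, p.angular_of_neg_le (by linarith), halfSlope,
      if_neg h₁.not_ge, show σ - (σ - κ) - ω = κ - ω by ring]
    refine mul_nonneg (sin_nonneg_of_nonneg_of_le_pi (by linarith) (by linarith)) ?_
    simpa only [neg_mul, ← sub_eq_add_neg] using p.jump_add_nonneg (a := σ - κ)
      (h := (κ - ω) / 2) ⟨by linarith, by linarith⟩ ⟨by linarith, by linarith⟩
  rcases lt_or_ge σ (-κ) with h₂ | h₂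
  · rw [excessAngle_of_le hκ.le h₂.le, p.angular_of_lt_neg h₂,
      show σ - (σ + κ) - ω = -κ - ω by ring,
      show σ + κ + (-κ - ω) / 2 = (-κ - ω) / 2 - (-σ - κ) by ring,
      show σ + κ = -(-σ - κ) by ring, cos_neg]
    exact mul_nonneg (sin_nonneg_of_nonneg_of_le_pi (by linarith) (by linarith))
      (p.jump_sub_nonneg ⟨by linarith, by linarith⟩ ⟨by linarith, by linarith⟩)
  · rw [excessAngle_of_abs_le (abs_le.2 ⟨h₂, h₁⟩), p.angular_of_neg_le h₂, halfSlope, if_pos h₁,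
      sub_zero, zero_add, cos_zero, one_mul, neg_mul, ← sub_eq_add_neg]
    exact mul_nonneg (sin_nonneg_of_nonneg_of_le_pi (by linarith) (by linarith))
      (p.jump_center_nonneg (abs_le.2 ⟨h₂, h₁⟩) ⟨by linarith, by linarith⟩ (by linarith))

end AngularProfile

section Planar

variable {κ α ω h : ℝ} {z e : ℂ}

/-- The component of `z` in the direction that makes the angle `ω` with the real axis. -/
noncomputable def component (ω : ℝ) (z : ℂ) : ℝ := cos ω * z.re + sin ω * z.im

lemma continuous_component : Continuous (component ω) := by
  unfold component
  fun_prop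

lemma component_add (ω : ℝ) (z w : ℂ) : component ω (z + w) = component ω z + component ω w := by
  simp only [component, Complex.add_re, Complex.add_im]
  ring

lemma component_smul (ω t : ℝ) (z : ℂ) : component ω (t • z) = t * component ω z := by
  simp only [component, Complex.smul_re, Complex.smul_im, smul_eq_mul]
  ring

lemma component_eq_norm_mul_cos (ω : ℝ) (z : ℂ) : component ω z = ‖z‖ * cos (z.arg - ω) := by
  rw [component, cos_sub, ← Complex.norm_mul_cos_arg z, ← Complex.norm_mul_sin_arg z]
  ring

lemma div_re_eq_component : (e / z).re = component z.arg e / ‖z‖ := by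
  rw [Complex.div_re, Complex.normSq_eq_norm_sq, component]
  nth_rw 1 [← Complex.norm_mul_cos_arg z, ← Complex.norm_mul_sin_arg z]
  field_simp

lemma div_im_eq_component : (e / z).im = component (z.arg + π / 2) e / ‖z‖ := by
  rw [Complex.div_im, Complex.normSq_eq_norm_sq, component, cos_add_pi_div_two,
    sin_add_pi_div_two]
  nth_rw 1 [← Complex.norm_mul_cos_arg z, ← Complex.norm_mul_sin_arg z]
  field_simp
  ring

lemma hasDerivAt_add_smul (z e : ℂ) : HasDerivAt (fun t : ℝ => z + t • e) e 0 := by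
  simpa using ((hasDerivAt_id (0 : ℝ)).smul_const e).const_add z

lemma hasLineDerivAt_component (ω : ℝ) (z e : ℂ) :
    HasLineDerivAt ℝ (component ω) (component ω e) z e := by
  simp only [HasLineDerivAt, component_add, component_smul]
  simpa using ((hasDerivAt_id (0 : ℝ)).mul_const (component ω e)).const_add (component ω z)

lemma hasLineDerivAt_arg (hz : z ∈ Complex.slitPlane) :
    HasLineDerivAt ℝ Complex.arg (e / z).im z e := by
  have hlog := (hasDerivAt_add_smul z e).clog_real (by simpa using hz)
  simpa [HasLineDerivAt, Function.comp_def, Complex.log_im] using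
    Complex.imCLM.hasFDerivAt.comp_hasDerivAt (0 : ℝ) hlog

lemma hasLineDerivAt_norm (hz : z ≠ 0) :
    HasLineDerivAt ℝ (fun z : ℂ => ‖z‖) (component z.arg e) z e := by
  have hsqrt := (hasDerivAt_add_smul z e).norm_sq.sqrt (by simpa using hz)
  simp only [sqrt_sq (norm_nonneg _), zero_smul, add_zero] at hsqrt
  refine hsqrt.congr_deriv ?_
  rw [component, Complex.cos_arg hz, Complex.sin_arg, Complex.inner, Complex.mul_re,
    Complex.conj_re, Complex.conj_im]
  field_simp
  ring

lemma hasLineDerivAt_div (hz : z ≠ 0) : HasLineDerivAt ℝ (fun z => e / z) (-(e / z) ^ 2) z e := by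
  refine ((hasDerivAt_const (0 : ℝ) e).div (hasDerivAt_add_smul z e)
    (by simpa using hz)).congr_deriv ?_
  simp only [zero_smul, add_zero]
  ring

/-- The orthonormal frame of the plane along which gradients and divergences are computed. -/
noncomputable def frame : Fin 2 → ℂ := ![1, Complex.I]

lemma sum_component_frame_mul (σ τ : ℝ) :
    ∑ k, component σ (frame k) * component τ (frame k) = cos (σ - τ) := by
  simp [component, frame, cos_sub]

lemma sum_frame_div_sq (z : ℂ) : ∑ k, (frame k / z) ^ 2 = 0 := by
  rw [Fin.sum_univ_two]
  simp [frame, div_pow, neg_div]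

lemma norm_frame (k : Fin 2) : ‖frame k‖ = 1 := by
  fin_cases k <;> simp [frame]

lemma sum_cornerField (l a a' : ℝ) (z : ℂ) :
    ∑ k, (-(l * ((frame k / z) ^ 2).re + a * ((frame k / z) ^ 2).im) + a' * (frame k / z).im ^ 2 +
      (l * (frame k / z).re + a * (frame k / z).im) ^ 2) = (a' + a ^ 2 + l ^ 2) / ‖z‖ ^ 2 := by
  have hre := congrArg Complex.re (sum_frame_div_sq z)
  have him := congrArg Complex.im (sum_frame_div_sq z)
  rw [Complex.re_sum, Complex.zero_re] at hre
  rw [Complex.im_sum, Complex.zero_im] at him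
  calc _ = ∑ k, ((-l + (l ^ 2 - a ^ 2 - a') / 2) * ((frame k / z) ^ 2).re +
        (-a + l * a) * ((frame k / z) ^ 2).im + (a' + a ^ 2 + l ^ 2) / 2 * ‖frame k / z‖ ^ 2) := by
        refine Finset.sum_congr rfl fun k _ => ?_
        rw [← Complex.normSq_eq_norm_sq, Complex.normSq_apply, sq (frame k / z), Complex.mul_re,
          Complex.mul_im]
        ring
    _ = _ := by
        simp only [Finset.sum_add_distrib, ← Finset.mul_sum, hre, him, norm_div, norm_frame,
          Fin.sum_univ_two]
        ring

/-- The sector of opening angle `π + 2κ` around the positive real axis. -/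
def sector (κ : ℝ) : Set ℂ := {z | z ∈ Complex.slitPlane ∧ |z.arg| < π / 2 + κ}

lemma continuousOn_arg : ContinuousOn Complex.arg Complex.slitPlane := fun _ hz =>
  (Complex.continuousAt_arg hz).continuousWithinAt

lemma ne_zero_of_mem_sector (hz : z ∈ sector κ) : z ≠ 0 := Complex.slitPlane_ne_zero hz.1

lemma continuousOn_div_sector (e : ℂ) : ContinuousOn (fun z => e / z) (sector κ) :=
  continuousOn_const.div continuousOn_id fun _ => ne_zero_of_mem_sector

/-- The distance from `z` to the wedge with vertex `0` and complement `sector κ`. -/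
noncomputable def sectorDist (κ : ℝ) (z : ℂ) : ℝ := ‖z‖ * cos (excessAngle κ z.arg)

lemma sectorDist_pos (hz : z ∈ sector κ) : 0 < sectorDist κ z :=
  mul_pos (norm_pos_iff.2 (ne_zero_of_mem_sector hz)) (cos_excessAngle_pos hz.2)

lemma continuousOn_sectorDist : ContinuousOn (sectorDist κ) (sector κ) :=
  continuous_norm.continuousOn.mul (continuous_cos.comp_continuousOn
    (continuous_excessAngle.comp_continuousOn (continuousOn_arg.mono fun _ hz => hz.1)))

lemma hasLineDerivAt_sectorDist (hκ : 0 ≤ κ) (hz : z ∈ sector κ) :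
    HasLineDerivAt ℝ (sectorDist κ) (component (z.arg - excessAngle κ z.arg) e) z e := by
  have hz0 := ne_zero_of_mem_sector hz
  have harg : HasDerivAt (fun t : ℝ => (z + t • e).arg) (e / z).im 0 := hasLineDerivAt_arg hz.1
  have hnorm : HasDerivAt (fun t : ℝ => ‖z + t • e‖) (component z.arg e) 0 :=
    hasLineDerivAt_norm hz0
  refine (hnorm.mul ((hasDerivAt_cos_excessAngle hκ _).comp 0 harg)).congr_deriv ?_
  rw [div_im_eq_component]
  simp only [zero_smul, add_zero, Function.comp, component, cos_add_pi_div_two,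
    sin_add_pi_div_two, cos_sub, sin_sub]
  field_simp [norm_ne_zero_iff.2 hz0]
  ring

end Planar

lemma AngularProfile.continuousOn_angular_arg {κ α : ℝ} (p : AngularProfile κ α) :
    ContinuousOn (fun z : ℂ => p.angular z.arg) (sector κ) := fun _ hz =>
  (p.hasDerivAt_angular hz.2).continuousAt.comp_continuousWithinAt
    (Complex.continuousAt_arg hz.1).continuousWithinAt

namespace HardyPair

variable {κ α ω h : ℝ} {U : Set ℂ}

/-- The pair attached to the half plane where `component ω + h` is positive. -/
noncomputable def edge (α ω h : ℝ) (hU : ∀ z ∈ U, 0 < component ω z + h) :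
    HardyPair frame U (α * (1 - α)) where
  dist z := component ω z + h
  dist' k _ := component ω (frame k)
  field k z := α * component ω (frame k) / (component ω z + h)
  field' k z := -(α * component ω (frame k) ^ 2 / (component ω z + h) ^ 2)
  continuousOn_dist := (continuous_component.add_const h).continuousOn
  continuousOn_dist' _ := continuousOn_const
  continuousOn_field _ := continuousOn_const.div (continuous_component.add_const h).continuousOn
    fun z hz => (hU z hz).ne'
  continuousOn_field' _ := (continuousOn_const.div
    ((continuous_component.add_const h).pow 2).continuousOn
    fun z hz => (pow_pos (hU z hz) 2).ne').neg
  hasLineDerivAt_dist k z _ := (hasLineDerivAt_component ω z (frame k)).add_const h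
  hasLineDerivAt_field k z hz := by
    have hdist : HasDerivAt (fun t : ℝ => component ω (z + t • frame k) + h) _ 0 :=
      (hasLineDerivAt_component ω z (frame k)).add_const h
    refine ((hasDerivAt_const (0 : ℝ) (α * component ω (frame k))).div hdist
      (by simpa using (hU z hz).ne')).congr_deriv ?_
    simp only [zero_smul, add_zero]
    ring
  dist_pos := hU
  riccati z _ := by
    have hunit := sum_component_frame_mul ω ω
    rw [sub_self, cos_zero] at hunit
    refine le_of_eq ?_
    calc α * (1 - α) / (component ω z + h) ^ 2
        = α * (1 - α) / (component ω z + h) ^ 2 *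
            ∑ k, component ω (frame k) * component ω (frame k) := by rw [hunit, mul_one]
      _ = _ := by
        rw [Finset.mul_sum, ← Finset.sum_neg_distrib]
        refine Finset.sum_congr rfl fun k _ => ?_
        rw [div_pow]
        ring

/-- The pair attached to the reflex corner, with the field
`(lam ∂ᵣ + angular (arg z) r⁻¹ ∂_φ) / r` in polar coordinates. -/
noncomputable def corner (p : AngularProfile κ α) (hU : U ⊆ sector κ) :
    HardyPair frame U (α * (1 - α)) where
  dist := sectorDist κ
  dist' k z := component (z.arg - excessAngle κ z.arg) (frame k)
  field k z := p.lam * (frame k / z).re + p.angular z.arg * (frame k / z).im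
  field' k z := -(p.lam * ((frame k / z) ^ 2).re + p.angular z.arg * ((frame k / z) ^ 2).im) +
    p.angular' z.arg * (frame k / z).im ^ 2
  continuousOn_dist := continuousOn_sectorDist.mono hU
  continuousOn_dist' k := by
    have harg := continuousOn_arg.mono fun z hz => (hU hz).1
    have hangle : ContinuousOn (fun z : ℂ => z.arg - excessAngle κ z.arg) U :=
      harg.sub (continuous_excessAngle.comp_continuousOn harg)
    simp only [component]
    fun_prop
  continuousOn_field k := by
    have hdiv := continuousOn_div_sector (frame k) |>.mono hU
    have hangular := p.continuousOn_angular_arg.mono hU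
    fun_prop
  continuousOn_field' k := by
    have hdiv := continuousOn_div_sector (frame k) |>.mono hU
    have hangular := p.continuousOn_angular_arg.mono hU
    have hangular' : ContinuousOn (fun z : ℂ => p.angular' z.arg) U :=
      p.continuousOn_angular'.comp (continuousOn_arg.mono fun z hz => (hU hz).1)
        fun z hz => (hU hz).2
    fun_prop
  hasLineDerivAt_dist k z hz := hasLineDerivAt_sectorDist p.angle_mem.1.le (hU hz)
  hasLineDerivAt_field k z hz := by
    have hdiv : HasDerivAt (fun t : ℝ => frame k / (z + t • frame k)) (-(frame k / z) ^ 2) 0 :=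
      hasLineDerivAt_div (ne_zero_of_mem_sector (hU hz))
    have hre := Complex.reCLM.hasFDerivAt.comp_hasDerivAt (0 : ℝ) hdiv
    have him := Complex.imCLM.hasFDerivAt.comp_hasDerivAt (0 : ℝ) hdiv
    have harg : HasDerivAt (fun t : ℝ => (z + t • frame k).arg) (frame k / z).im 0 :=
      hasLineDerivAt_arg (hU hz).1
    have hangular : HasDerivAt p.angular (p.angular' z.arg) (z + (0 : ℝ) • frame k).arg := by
      simpa using p.hasDerivAt_angular (hU hz).2
    refine ((hre.const_mul p.lam).add
      ((hangular.comp (0 : ℝ) harg).mul him)).congr_deriv ?_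
    simp only [Function.comp, Complex.reCLM_apply, Complex.imCLM_apply, zero_smul, add_zero,
      Complex.neg_re, Complex.neg_im]
    ring
  dist_pos z hz := sectorDist_pos (hU hz)
  riccati z hz := by
    rw [sum_cornerField, sectorDist, mul_pow, mul_comm (‖z‖ ^ 2), ← div_div, ← neg_div]
    gcongr
    linarith [p.angular_riccati (hU hz).2]

lemma edge_jump_edge_nonneg (hα : 0 ≤ α) {ω₁ ω₂ h₁ h₂ : ℝ}
    (hU₁ : ∀ z ∈ U, 0 < component ω₁ z + h₁) (hU₂ : ∀ z ∈ U, 0 < component ω₂ z + h₂) {z : ℂ}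
    (hz : z ∈ U) : 0 ≤ (edge α ω₁ h₁ hU₁).jump (edge α ω₂ h₂ hU₂) z := by
  have h₁pos := hU₁ z hz
  have h₂pos := hU₂ z hz
  have hcos := cos_le_one (ω₁ - ω₂)
  have hjump : (edge α ω₁ h₁ hU₁).jump (edge α ω₂ h₂ hU₂) z =
      (α / (component ω₁ z + h₁) + α / (component ω₂ z + h₂)) * (1 - cos (ω₁ - ω₂)) := by
    have h₁₁ := sum_component_frame_mul ω₁ ω₁
    have h₂₂ := sum_component_frame_mul ω₂ ω₂
    have h₁₂ := sum_component_frame_mul ω₁ ω₂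
    rw [sub_self, cos_zero] at h₁₁ h₂₂
    simp only [jump, edge, Fin.sum_univ_two] at h₁₁ h₂₂ h₁₂ ⊢
    rw [← h₁₂]
    linear_combination
      α / (component ω₁ z + h₁) * h₁₁ + α / (component ω₂ z + h₂) * h₂₂
  rw [hjump]
  exact mul_nonneg (by positivity) (by linarith)

lemma corner_jump_edge_eq (p : AngularProfile κ α) (hU : U ⊆ sector κ)
    (hUω : ∀ z ∈ U, 0 < component ω z + h) {z : ℂ} {x η : ℝ} (hx : excessAngle κ z.arg = x)
    (hη : z.arg - ω = x + η + η) :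
    (corner p hU).jump (edge α ω h hUω) z =
      2 * sin η * (p.lam * sin (x + η) + p.angular z.arg * cos (x + η)) / ‖z‖ +
        2 * α * sin η ^ 2 / (component ω z + h) := by
  set σ := z.arg
  have hsum : ∀ ζ τ, cos (ζ - τ) = ∑ k, component ζ (frame k) * component τ (frame k) :=
    fun ζ τ => (sum_component_frame_mul ζ τ).symm
  have hexpand : (corner p hU).jump (edge α ω h hUω) z =
      (p.lam * (cos (σ - (σ - x)) - cos (σ - ω)) +
        p.angular σ * (cos (σ + π / 2 - (σ - x)) - cos (σ + π / 2 - ω))) / ‖z‖ +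
        α * (cos (ω - ω) - cos (ω - (σ - x))) / (component ω z + h) := by
    simp only [hsum, ← hx, jump, corner, edge, Fin.sum_univ_two, div_re_eq_component,
      div_im_eq_component]
    ring
  rw [hexpand, sub_sub_cancel, hη, sub_self, cos_zero,
    show ω - (σ - x) = -(2 * η) by linear_combination -hη,
    show σ + π / 2 - (σ - x) = x + η - η + π / 2 by ring,
    show σ + π / 2 - ω = x + η + η + π / 2 by linear_combination hη, cos_add_pi_div_two,
    cos_add_pi_div_two, cos_neg, cos_two_mul, cos_sq']
  nth_rw 1 [show x = x + η - η by ring]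
  rw [cos_sub, cos_add (x + η), sin_sub, sin_add (x + η)]
  ring

lemma corner_jump_edge_nonneg (hα : 0 ≤ α) (p : AngularProfile κ α) (hU : U ⊆ sector κ)
    (hUω : ∀ z ∈ U, 0 < component ω z + h) (hω : |ω| ∈ Ioo κ (π - κ)) {z : ℂ} (hz : z ∈ U)
    (hle : component ω z + h ≤ sectorDist κ z) :
    0 ≤ (corner p hU).jump (edge α ω h hUω) z := by
  set σ := z.arg
  set x := excessAngle κ σ
  set L := component ω z + h
  set η := (σ - x - ω) / 2
  have hr : 0 < ‖z‖ := norm_pos_iff.2 (ne_zero_of_mem_sector (hU hz))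
  have hcos : 0 < cos x := cos_excessAngle_pos (hU hz).2
  have hη : σ - ω = x + η + η := by ring
  have hedge : 2 * α * sin η ^ 2 / (‖z‖ * cos x) ≤ 2 * α * sin η ^ 2 / L := by
    gcongr
    · exact hUω z hz
    · exact hle
  calc 0 ≤ 2 / (‖z‖ * cos x) * (sin η * (cos x * (p.lam * sin (x + η) +
        p.angular σ * cos (x + η)) + α * sin η)) :=
        mul_nonneg (by positivity) (p.jump_nonneg (hU hz).2 hω)
    _ = 2 * sin η * (p.lam * sin (x + η) + p.angular σ * cos (x + η)) / ‖z‖ +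
        2 * α * sin η ^ 2 / (‖z‖ * cos x) := by
        field_simp
    _ ≤ 2 * sin η * (p.lam * sin (x + η) + p.angular σ * cos (x + η)) / ‖z‖ +
        2 * α * sin η ^ 2 / L := by
        gcongr
    _ = (corner p hU).jump (edge α ω h hUω) z :=
        (corner_jump_edge_eq p hU hUω rfl hη).symm

variable {ι : Type*} {ω h : ι → ℝ}

/-- The corner pair together with a family of edge pairs. -/
noncomputable def cornerFamily (p : AngularProfile κ α) (hU : U ⊆ sector κ)
    (hUω : ∀ i, ∀ z ∈ U, 0 < component (ω i) z + h i) :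
    Option ι → HardyPair frame U (α * (1 - α))
  | none => corner p hU
  | some i => edge α (ω i) (h i) (hUω i)

lemma hasFavorableJumps_cornerFamily (hα : 0 ≤ α) (p : AngularProfile κ α) (hU : U ⊆ sector κ)
    (hUω : ∀ i, ∀ z ∈ U, 0 < component (ω i) z + h i) (hω : ∀ i, |ω i| ∈ Ioo κ (π - κ)) :
    HasFavorableJumps (cornerFamily p hU hUω) fun i => if i = none then 1 else 0 := by
  rintro (_ | i) (_ | j) hprio z hz hle
  · simp [jump]
  · exact corner_jump_edge_nonneg hα p hU (hUω j) (hω j) hz hle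
  · simp at hprio
  · exact edge_jump_edge_nonneg hα (hUω i) (hUω j) hz

end HardyPair

theorem AngularProfile.hardy_inequality {κ α : ℝ} (p : AngularProfile κ α) (hα : α ∈ Icc 0 1)
    {ι : Type*} [Finite ι] {ω h : ι → ℝ} (hω : ∀ i, |ω i| ∈ Ioo κ (π - κ)) {U : Set ℂ}
    (hU : IsOpen U) (hUκ : U ⊆ sector κ) (hUω : ∀ i, ∀ z ∈ U, 0 < component (ω i) z + h i)
    {d v : ℂ → ℝ} (hd : ContinuousOn d U) (hd0 : ∀ z ∈ U, 0 < d z)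
    (hdist : ∀ z ∈ U, sectorDist κ z ≤ d z ∨ ∃ i, component (ω i) z + h i ≤ d z)
    (hv : ContDiff ℝ 1 v) (hcs : HasCompactSupport v) (hvU : tsupport v ⊆ U) :
    α * (1 - α) * ∫ z, v z ^ 2 / d z ^ 2 ≤
      ∫ z, (fderiv ℝ v z 1 ^ 2 + fderiv ℝ v z Complex.I ^ 2) := by
  have hmix := (HardyPair.hasFavorableJumps_cornerFamily hα.1 p hUκ hUω hω).hardy_inequality
    (μ := volume) hU (mul_nonneg hα.1 (sub_nonneg.2 hα.2)) hd hd0 (fun z hz => ?_) hv hcs hvU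
  · simpa [Fin.sum_univ_two, frame] using hmix
  · rcases hdist z hz with hcorner | ⟨i, hedge⟩
    · exact ⟨none, hcorner⟩
    · exact ⟨some i, hedge⟩

section Component

variable {ω M : ℝ} {z w X Y : ℂ}

lemma isLinearMap_component (ω : ℝ) : IsLinearMap ℝ (component ω) :=
  ⟨component_add ω, component_smul ω⟩

lemma component_sub (ω : ℝ) (z w : ℂ) : component ω (z - w) = component ω z - component ω w :=
  (isLinearMap_component ω).map_sub z w

lemma component_zero (ω : ℝ) : component ω 0 = 0 := (isLinearMap_component ω).map_zero

lemma component_add_pi (ω : ℝ) (z : ℂ) : component (ω + π) z = -component ω z := by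
  simp only [component, cos_add_pi, sin_add_pi]
  ring

lemma component_ofReal (ω r : ℝ) : component ω r = cos ω * r := by
  simp [component]

lemma component_le_norm (ω : ℝ) (z : ℂ) : component ω z ≤ ‖z‖ := by
  rw [component_eq_norm_mul_cos]
  exact mul_le_of_le_one_right (norm_nonneg z) (cos_le_one _)

lemma component_le_of_mem_segment (hX : component ω X ≤ M) (hY : component ω Y ≤ M)
    (hw : w ∈ segment ℝ X Y) : component ω w ≤ M :=
  (convex_halfSpace_le (isLinearMap_component ω) M).segment_subset hX hY hw

lemma le_component_of_mem_segment (hX : M ≤ component ω X) (hY : M ≤ component ω Y)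
    (hw : w ∈ segment ℝ X Y) : M ≤ component ω w :=
  (convex_halfSpace_ge (isLinearMap_component ω) M).segment_subset hX hY hw

lemma exists_pos_add_smul_mem {W : Set ℂ} (hW : IsOpen W) (hz : z ∈ W) (e : ℂ) :
    ∃ t : ℝ, 0 < t ∧ z + t • e ∈ W := by
  have hcont : ContinuousAt (fun t : ℝ => z + t • e) 0 := by fun_prop
  have hmem := hcont.eventually (hW.mem_nhds (by simpa using hz))
  obtain ⟨t, htW, ht⟩ := ((hmem.filter_mono nhdsWithin_le_nhds).and
    (self_mem_nhdsWithin (s := Ioi 0))).exists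
  exact ⟨t, ht, htW⟩

lemma component_lt_of_frontier_le {W : Set ℂ} (hW : IsOpen W) (hbdd : Bornology.IsBounded W)
    (hM : ∀ w ∈ frontier W, component ω w ≤ M) (hz : z ∈ W) : component ω z < M := by
  have hincrease : ∀ w ∈ W, ∃ w' ∈ W, component ω w < component ω w' := by
    intro w hw
    obtain ⟨t, ht, htW⟩ := exists_pos_add_smul_mem hW hw ⟨cos ω, sin ω⟩
    refine ⟨_, htW, ?_⟩
    rw [component_add, component_smul]
    have hunit : component ω ⟨cos ω, sin ω⟩ = 1 := by
      simp only [component]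
      linarith [cos_sq_add_sin_sq ω]
    rw [hunit, mul_one]
    exact lt_add_of_pos_right _ ht
  obtain ⟨m, hm, hmax⟩ := hbdd.isCompact_closure.exists_isMaxOn ⟨z, subset_closure hz⟩
    (continuous_component (ω := ω)).continuousOn
  have hmW : m ∉ W := fun h => by
    obtain ⟨w', hw', hlt⟩ := hincrease m h
    exact (hmax (subset_closure hw')).not_gt hlt
  obtain ⟨z', hz', hlt⟩ := hincrease z hz
  exact hlt.trans_le ((hmax (subset_closure hz')).trans (hM m (hW.frontier_eq ▸ ⟨hm, hmW⟩)))

lemma abs_arg_lt_of_component_pos {κ : ℝ} (hκ : κ ∈ Icc 0 (π / 2)) (hleft : 0 < component κ z)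
    (hright : 0 < component (-κ) z) : |z.arg| < π / 2 - κ := by
  rw [component_eq_norm_mul_cos] at hleft hright
  have hleft := pos_of_mul_pos_right hleft (norm_nonneg z)
  have hright := pos_of_mul_pos_right hright (norm_nonneg z)
  have harg := Complex.neg_pi_lt_arg z
  have harg' := Complex.arg_le_pi z
  obtain ⟨hκ0, hκ2⟩ := hκ
  by_contra! h
  rcases le_abs.1 h with h | h
  · exact hright.not_ge (cos_nonpos_of_pi_div_two_le_of_le (by linarith) (by linarith))
  · rw [← cos_neg] at hleft
    exact hleft.not_ge (cos_nonpos_of_pi_div_two_le_of_le (by linarith) (by linarith))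

lemma mem_sector_of_component_pos {κ : ℝ} (hκ : κ ∈ Ico 0 (π / 2))
    (h : 0 < component κ z ∨ 0 < component (-κ) z) : z ∈ sector κ := by
  simp only [component_eq_norm_mul_cos] at h
  have hz : 0 < ‖z‖ := norm_pos_iff.2 fun hz => by simp [hz] at h
  have harg := Complex.neg_pi_lt_arg z
  have harg' := Complex.arg_le_pi z
  obtain ⟨hκ0, hκ2⟩ := hκ
  have hlt : |z.arg| < π / 2 + κ := by
    contrapose! h
    suffices cos (z.arg - κ) ≤ 0 ∧ cos (z.arg - -κ) ≤ 0 from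
      ⟨mul_nonpos_of_nonneg_of_nonpos hz.le this.1, mul_nonpos_of_nonneg_of_nonpos hz.le this.2⟩
    rcases le_abs.1 h with h | h
    · exact ⟨cos_nonpos_of_pi_div_two_le_of_le (by linarith) (by linarith),
        cos_nonpos_of_pi_div_two_le_of_le (by linarith) (by linarith)⟩
    · rw [← cos_neg (z.arg - κ), ← cos_neg (z.arg - -κ)]
      exact ⟨cos_nonpos_of_pi_div_two_le_of_le (by linarith) (by linarith),
        cos_nonpos_of_pi_div_two_le_of_le (by linarith) (by linarith)⟩
  refine ⟨Complex.mem_slitPlane_iff_arg.2 ⟨fun hpi => ?_, norm_pos_iff.1 hz⟩, hlt⟩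
  rw [hpi, abs_of_pos pi_pos] at hlt
  linarith

lemma exists_sectorDist_eq_component {κ : ℝ} (hκ : 0 ≤ κ) (z : ℂ) :
    ∃ τ, |τ| ≤ κ ∧ sectorDist κ z = component τ z := by
  refine ⟨z.arg - excessAngle κ z.arg, ?_, ?_⟩
  · rcases le_total z.arg κ with h | h
    · rcases le_total (-κ) z.arg with h' | h'
      · rwa [excessAngle_of_abs_le (abs_le.2 ⟨h', h⟩), sub_zero, abs_le, and_iff_left h]
      · rw [excessAngle_of_le hκ h', sub_add_cancel_left, abs_neg, abs_of_nonneg hκ]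
    · rw [excessAngle_of_ge hκ h, sub_sub_cancel, abs_of_nonneg hκ]
  · rw [sectorDist, component_eq_norm_mul_cos, sub_sub_cancel]

end Component

/-- A bounded open region in normal position: its frontier is covered by the sides `0A`, `0B`, `AC`,
`BC` of a quadrilateral whose reflex vertex is the origin, the directions of `A` and `B` bound the
sector of opening angle `π + 2κ` around the positive real axis, and near the origin the region lies
on the side of that sector, as witnessed by one point on each half of the real axis. -/
structure IsNormalRegion (κ : ℝ) (A B C : ℂ) (W : Set ℂ) : Prop where
  angle_mem : κ ∈ Ioo 0 (π / 2)
  isOpen : IsOpen W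
  isBounded : Bornology.IsBounded W
  frontier_subset : frontier W ⊆
    segment ℝ 0 A ∪ segment ℝ 0 B ∪ segment ℝ A C ∪ segment ℝ B C
  arg_left : A.arg = π / 2 + κ
  arg_right : B.arg = -(π / 2 + κ)
  exists_mem : ∃ r : ℝ, 0 < r ∧ (r : ℂ) ∈ W
  exists_notMem : ∃ r : ℝ, 0 < r ∧ -(r : ℂ) ∉ W

namespace IsNormalRegion

variable {κ ω M : ℝ} {A B C z : ℂ} {W : Set ℂ} (hW : IsNormalRegion κ A B C W)
include hW

lemma component_left (ω : ℝ) : component ω A = ‖A‖ * sin (ω - κ) := by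
  rw [component_eq_norm_mul_cos, hW.arg_left, ← cos_pi_div_two_sub,
    show π / 2 + κ - ω = π / 2 - (ω - κ) by ring]

lemma component_right (ω : ℝ) : component ω B = -(‖B‖ * sin (ω + κ)) := by
  rw [component_eq_norm_mul_cos, hW.arg_right, ← mul_neg, ← cos_add_pi_div_two, ← cos_neg]
  ring_nf

lemma cos_pos (hω : |ω| ≤ κ) : 0 < cos ω := by
  obtain ⟨hleft, hright⟩ := abs_le.1 hω
  exact cos_pos_of_mem_Ioo ⟨by linarith [hW.angle_mem.2], by linarith [hW.angle_mem.2]⟩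

lemma component_left_nonpos (hω : |ω| ≤ κ) : component ω A ≤ 0 := by
  obtain ⟨hleft, hright⟩ := abs_le.1 hω
  rw [hW.component_left]
  exact mul_nonpos_of_nonneg_of_nonpos (norm_nonneg A)
    (sin_nonpos_of_nonpos_of_neg_pi_le (by linarith) (by linarith [hW.angle_mem.2]))

lemma component_right_nonpos (hω : |ω| ≤ κ) : component ω B ≤ 0 := by
  obtain ⟨hleft, hright⟩ := abs_le.1 hω
  rw [hW.component_right, neg_nonpos]
  exact mul_nonneg (norm_nonneg B)
    (sin_nonneg_of_nonneg_of_le_pi (by linarith) (by linarith [hW.angle_mem.2]))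

lemma component_lt (h0 : 0 ≤ M) (hA : component ω A ≤ M) (hB : component ω B ≤ M)
    (hC : component ω C ≤ M) (hz : z ∈ W) : component ω z < M := by
  refine component_lt_of_frontier_le hW.isOpen hW.isBounded (fun w hw => ?_) hz
  rw [← component_zero ω] at h0
  rcases hW.frontier_subset hw with ((h | h) | h) | h <;>
    exact component_le_of_mem_segment ‹_› ‹_› h

lemma lt_component (h0 : M ≤ 0) (hA : M ≤ component ω A) (hB : M ≤ component ω B)
    (hC : M ≤ component ω C) (hz : z ∈ W) : M < component ω z := by
  have := hW.component_lt (ω := ω + π) (M := -M) (z := z)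
  simp only [component_add_pi, neg_le_neg_iff, neg_lt_neg_iff, neg_nonneg] at this
  exact this h0 hA hB hC hz

lemma component_apex_pos (hω : |ω| ≤ κ) : 0 < component ω C := by
  by_contra! hC
  obtain ⟨r, hr, hrW⟩ := hW.exists_mem
  have hneg := hW.component_lt le_rfl (hW.component_left_nonpos hω)
    (hW.component_right_nonpos hω) hC hrW
  rw [component_ofReal] at hneg
  exact hneg.not_gt (mul_pos (hW.cos_pos hω) hr)

lemma abs_arg_apex_sub_lt {X : ℂ} (hX : ∀ ω, |ω| ≤ κ → component ω X ≤ 0) :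
    |(C - X).arg| < π / 2 - κ := by
  obtain ⟨hκ, hκ2⟩ := hW.angle_mem
  have hpos : ∀ ω, |ω| ≤ κ → 0 < component ω (C - X) := fun ω hω => by
    rw [component_sub]
    linarith [hX ω hω, hW.component_apex_pos hω]
  exact abs_arg_lt_of_component_pos ⟨hκ.le, hκ2.le⟩ (hpos κ (abs_of_pos hκ).le)
    (hpos (-κ) (by rw [abs_neg, abs_of_pos hκ]))

lemma exists_left_normal : ∃ ω ∈ Ioo (κ - π) (-κ), component ω C = component ω A := by
  obtain ⟨hleft, hright⟩ := abs_lt.1 (hW.abs_arg_apex_sub_lt fun ω => hW.component_left_nonpos)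
  refine ⟨(C - A).arg - π / 2, ⟨by linarith, by linarith⟩, sub_eq_zero.1 ?_⟩
  rw [← component_sub, component_eq_norm_mul_cos, sub_sub_cancel, cos_pi_div_two, mul_zero]

lemma exists_right_normal : ∃ ω ∈ Ioo κ (π - κ), component ω C = component ω B := by
  obtain ⟨hleft, hright⟩ := abs_lt.1 (hW.abs_arg_apex_sub_lt fun ω => hW.component_right_nonpos)
  refine ⟨(C - B).arg + π / 2, ⟨by linarith, by linarith⟩, sub_eq_zero.1 ?_⟩
  rw [← component_sub, component_eq_norm_mul_cos, sub_add_cancel_left, cos_neg, cos_pi_div_two,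
    mul_zero]

lemma component_left_lt (hω : ω ∈ Ioo (κ - π) (-κ)) (hC : component ω C = component ω A)
    (hz : z ∈ W) : component ω A < component ω z := by
  have hA : component ω A ≤ 0 := by
    rw [hW.component_left]
    exact mul_nonpos_of_nonneg_of_nonpos (norm_nonneg A)
      (sin_nonpos_of_nonpos_of_neg_pi_le (by linarith [hω.2, hW.angle_mem.1]) (by linarith [hω.1]))
  have hB : 0 ≤ component ω B := by
    rw [hW.component_right, neg_nonneg]
    exact mul_nonpos_of_nonneg_of_nonpos (norm_nonneg B)
      (sin_nonpos_of_nonpos_of_neg_pi_le (by linarith [hω.2]) (by linarith [hω.1, hW.angle_mem.1]))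
  exact hW.lt_component hA le_rfl (hA.trans hB) hC.ge hz

lemma component_right_lt (hω : ω ∈ Ioo κ (π - κ)) (hC : component ω C = component ω B)
    (hz : z ∈ W) : component ω B < component ω z := by
  have hA : 0 ≤ component ω A := by
    rw [hW.component_left]
    exact mul_nonneg (norm_nonneg A)
      (sin_nonneg_of_nonneg_of_le_pi (by linarith [hω.1]) (by linarith [hω.2, hW.angle_mem.1]))
  have hB : component ω B ≤ 0 := by
    rw [hW.component_right, neg_nonpos]
    exact mul_nonneg (norm_nonneg B)
      (sin_nonneg_of_nonneg_of_le_pi (by linarith [hω.1, hW.angle_mem.1]) (by linarith [hω.2]))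
  exact hW.lt_component hB (hB.trans hA) le_rfl hC.ge hz

lemma frontier_nonempty : (frontier W).Nonempty := by
  obtain ⟨r, -, hr⟩ := hW.exists_mem
  obtain ⟨s, -, hs⟩ := hW.exists_notMem
  exact nonempty_frontier_iff.2 ⟨⟨r, hr⟩, ne_univ_iff_exists_notMem W |>.2 ⟨-s, hs⟩⟩

lemma component_nonneg_of_mem_frontier {w : ℂ} (hw : w ∈ frontier W) :
    0 ≤ component κ w ∨ 0 ≤ component (-κ) w := by
  have hκ : |κ| ≤ κ := (abs_of_pos hW.angle_mem.1).le
  have hO : ∀ ω, 0 ≤ component ω 0 := fun ω => (component_zero ω).ge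
  have hA : 0 ≤ component κ A := by rw [hW.component_left, sub_self, sin_zero, mul_zero]
  have hB : 0 ≤ component (-κ) B := by
    rw [hW.component_right, neg_add_cancel, sin_zero, mul_zero, neg_zero]
  rcases hW.frontier_subset hw with ((h | h) | h) | h
  · exact .inl (le_component_of_mem_segment (hO _) hA h)
  · exact .inr (le_component_of_mem_segment (hO _) hB h)
  · exact .inl (le_component_of_mem_segment hA (hW.component_apex_pos hκ).le h)
  · exact .inr (le_component_of_mem_segment hB
      (hW.component_apex_pos ((abs_neg κ).trans_le hκ)).le h)

lemma component_nonneg_of_mem (hz : z ∈ W) : 0 ≤ component κ z ∨ 0 ≤ component (-κ) z := by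
  by_contra! hneg
  let Q : Set ℂ := {w | component κ w < 0} ∩ {w | component (-κ) w < 0}
  have hQ : Convex ℝ Q := (convex_halfSpace_lt (isLinearMap_component κ) 0).inter
    (convex_halfSpace_lt (isLinearMap_component (-κ)) 0)
  have hQfrontier : closure W ∩ Q ⊆ W := fun w ⟨hw, hwκ, hwκ'⟩ => by
    by_contra hwW
    have hwf : w ∈ frontier W := hW.isOpen.frontier_eq ▸ ⟨hw, hwW⟩
    rcases hW.component_nonneg_of_mem_frontier hwf with h | h
    · exact h.not_gt hwκ
    · exact h.not_gt hwκ'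
  have hQW : Q ⊆ W := hQ.isPreconnected.subset_of_closure_inter_subset hW.isOpen
    ⟨z, hneg, hz⟩ hQfrontier
  obtain ⟨r, hr, hrW⟩ := hW.exists_notMem
  have hrQ : ∀ ω, |ω| ≤ κ → component ω (-(r : ℂ)) < 0 := fun ω hω => by
    rw [← Complex.ofReal_neg, component_ofReal]
    exact mul_neg_of_pos_of_neg (hW.cos_pos hω) (neg_lt_zero.2 hr)
  have hκ : |κ| ≤ κ := (abs_of_pos hW.angle_mem.1).le
  exact hrW (hQW ⟨hrQ κ hκ, hrQ (-κ) ((abs_neg κ).trans_le hκ)⟩)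

lemma subset_sector : W ⊆ sector κ := by
  intro z hz
  obtain ⟨hκ, hκ2⟩ := hW.angle_mem
  obtain ⟨t, ht, htW⟩ := exists_pos_add_smul_mem hW.isOpen hz ((-1 : ℝ) : ℂ)
  have hshift : ∀ ω, |ω| ≤ κ → 0 ≤ component ω (z + t • ((-1 : ℝ) : ℂ)) → 0 < component ω z :=
    fun ω hω h => by
      rw [component_add, component_smul, component_ofReal] at h
      linarith [mul_pos ht (hW.cos_pos hω)]
  have hκκ : |κ| ≤ κ := (abs_of_pos hκ).le
  exact mem_sector_of_component_pos ⟨hκ.le, hκ2⟩ <| (hW.component_nonneg_of_mem htW).imp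
    (hshift κ hκκ) (hshift (-κ) ((abs_neg κ).trans_le hκκ))

lemma sectorDist_le_or {w : ℂ} {ω₁ ω₂ : ℝ} (hAC : component ω₁ C = component ω₁ A)
    (hBC : component ω₂ C = component ω₂ B) (hw : w ∈ frontier W) (z : ℂ) :
    sectorDist κ z ≤ dist z w ∨ component ω₁ z - component ω₁ A ≤ dist z w ∨
      component ω₂ z - component ω₂ B ≤ dist z w := by
  have hdist : ∀ {ω M}, component ω w ≤ M → component ω z - M ≤ dist z w := fun {ω M} h =>
    (sub_le_sub_left h _).trans <| by
      rw [← component_sub, dist_eq_norm]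
      exact component_le_norm ω (z - w)
  obtain ⟨τ, hτ, hsector⟩ := exists_sectorDist_eq_component hW.angle_mem.1.le z
  have hcorner : component τ w ≤ 0 → sectorDist κ z ≤ dist z w := fun h => by
    rw [hsector, ← sub_zero (component τ z)]
    exact hdist h
  rcases hW.frontier_subset hw with ((h | h) | h) | h
  · exact .inl (hcorner (component_le_of_mem_segment (component_zero τ).le
      (hW.component_left_nonpos hτ) h))
  · exact .inl (hcorner (component_le_of_mem_segment (component_zero τ).le
      (hW.component_right_nonpos hτ) h))
  · exact .inr (.inl (hdist (component_le_of_mem_segment le_rfl hAC.le h)))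
  · exact .inr (.inr (hdist (component_le_of_mem_segment le_rfl hBC.le h)))

theorem hardy_inequality {α : ℝ} (p : AngularProfile κ α) (hα : α ∈ Icc 0 1) {v : ℂ → ℝ}
    (hv : ContDiff ℝ 1 v) (hcs : HasCompactSupport v) (hvW : tsupport v ⊆ W) :
    α * (1 - α) * ∫ z, v z ^ 2 / Metric.infDist z (frontier W) ^ 2 ≤
      ∫ z, (fderiv ℝ v z 1 ^ 2 + fderiv ℝ v z Complex.I ^ 2) := by
  obtain ⟨ω₁, hω₁, hAC⟩ := hW.exists_left_normal
  obtain ⟨ω₂, hω₂, hBC⟩ := hW.exists_right_normal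
  have hκ := hW.angle_mem.1
  have hω₁' : |ω₁| ∈ Ioo κ (π - κ) := by
    rw [abs_of_neg (by linarith [hω₁.2])]
    exact ⟨by linarith [hω₁.2], by linarith [hω₁.1]⟩
  have hω₂' : |ω₂| ∈ Ioo κ (π - κ) := by rwa [abs_of_pos (hκ.trans hω₂.1)]
  refine p.hardy_inequality (ι := Fin 2) (ω := ![ω₁, ω₂])
    (h := ![-component ω₁ A, -component ω₂ B]) hα (Fin.forall_fin_two.2 ⟨hω₁', hω₂'⟩) hW.isOpen
    hW.subset_sector (Fin.forall_fin_two.2 ⟨fun z hz => ?_, fun z hz => ?_⟩)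
    (Metric.continuous_infDist_pt _).continuousOn (fun z hz => ?_) (fun z _ => ?_) hv hcs hvW
  · simpa [← sub_eq_add_neg] using hW.component_left_lt hω₁ hAC hz
  · simpa [← sub_eq_add_neg] using hW.component_right_lt hω₂ hBC hz
  · refine (isClosed_frontier.notMem_iff_infDist_pos hW.frontier_nonempty).1 fun h => ?_
    exact (hW.isOpen.frontier_eq ▸ h).2 hz
  · obtain ⟨w, hw, hwz⟩ := isClosed_frontier.exists_infDist_eq_dist hW.frontier_nonempty z
    simpa [hwz, Fin.exists_fin_two, ← sub_eq_add_neg] using hW.sectorDist_le_or hAC hBC hw z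

end IsNormalRegion

section Transport

variable {E : Type*} [NormedAddCommGroup E] [InnerProductSpace ℝ E]
  (φ : ℂ ≃ᵃⁱ[ℝ] E) {Ω : Set E} {u : E → ℝ}

lemma preimage_frontier_eq : φ ⁻¹' frontier Ω = frontier (φ ⁻¹' Ω) :=
  φ.toHomeomorph.preimage_frontier Ω

lemma infDist_map_frontier (z : ℂ) :
    Metric.infDist (φ z) (frontier Ω) = Metric.infDist z (frontier (φ ⁻¹' Ω)) := by
  rw [← preimage_frontier_eq, ← Metric.infDist_image φ.isometry,
    image_preimage_eq _ φ.surjective]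

variable [FiniteDimensional ℝ E]

lemma norm_gradient_map_sq {z : ℂ} (hu : DifferentiableAt ℝ u (φ z)) :
    ‖gradient u (φ z)‖ ^ 2 =
      fderiv ℝ (u ∘ φ) z 1 ^ 2 + fderiv ℝ (u ∘ φ) z Complex.I ^ 2 := by
  let e := φ.linearIsometryEquiv
  have hφ : HasFDerivAt φ (e : ℂ →L[ℝ] E) z :=
    φ.toAffineIsometry.toContinuousAffineMap.hasFDerivAt
  have hderiv : ∀ w, fderiv ℝ (u ∘ φ) z w = inner ℝ (e.symm (gradient u (φ z))) w := fun w => by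
    rw [(hu.hasFDerivAt.comp z hφ).fderiv, ← e.inner_map_map, e.apply_symm_apply,
      inner_gradient_left]
    rfl
  rw [hderiv, hderiv, ← e.symm.norm_map, ← Complex.normSq_eq_norm_sq, Complex.normSq_apply,
    Complex.inner, Complex.inner, one_mul, Complex.conj_re, Complex.mul_re, Complex.conj_re,
    Complex.conj_im, Complex.I_re, Complex.I_im]
  ring

variable [MeasurableSpace E] [BorelSpace E]

lemma measurePreserving_affineIsometryEquiv : MeasurePreserving φ := by
  have hφ : ⇑φ = (· + φ 0) ∘ φ.linearIsometryEquiv := funext fun z => by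
    simpa using φ.map_vadd 0 z
  rw [hφ]
  exact (measurePreserving_add_right volume (φ 0)).comp φ.linearIsometryEquiv.measurePreserving

lemma setIntegral_eq_integral_map {F : E → ℝ} (hF : ∀ x ∉ Ω, F x = 0) :
    ∫ x in Ω, F x = ∫ z, F (φ z) := by
  rw [setIntegral_eq_integral_of_forall_compl_eq_zero hF,
    ← (measurePreserving_affineIsometryEquiv φ).integral_comp
      φ.toHomeomorph.measurableEmbedding]

lemma setIntegral_sq_div_infDist_sq_eq (hu : tsupport u ⊆ Ω) :
    ∫ x in Ω, u x ^ 2 / Metric.infDist x (frontier Ω) ^ 2 =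
      ∫ z, (u ∘ φ) z ^ 2 / Metric.infDist z (frontier (φ ⁻¹' Ω)) ^ 2 := by
  rw [setIntegral_eq_integral_map φ fun x hx => by
    rw [image_eq_zero_of_notMem_tsupport (mt (@hu x) hx)]; simp]
  simp only [infDist_map_frontier, Function.comp_apply]

lemma setIntegral_norm_gradient_sq_eq (hu : Differentiable ℝ u) (hsupp : tsupport u ⊆ Ω) :
    ∫ x in Ω, ‖gradient u x‖ ^ 2 =
      ∫ z, (fderiv ℝ (u ∘ φ) z 1 ^ 2 + fderiv ℝ (u ∘ φ) z Complex.I ^ 2) := by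
  rw [setIntegral_eq_integral_map φ fun x hx => by
    rw [gradient, image_eq_zero_of_notMem_tsupport
      (mt (fun h => hsupp (tsupport_fderiv_subset ℝ h)) hx)]; simp]
  simp only [norm_gradient_map_sq φ (hu _)]

end Transport

/-- A bounded open region whose frontier is covered by the sides `OA`, `OB`, `AC`, `BC` of a
quadrilateral and which near `O` is the complement of the wedge spanned by `A` and `B`, so that its
interior angle at `O` is `β > π`. Unlike for a quadrilateral, the sides may cross or overlap and
nothing is required at the other vertices. -/
structure IsReflexRegion (Ω : Set E2) (β : ℝ) (O A B C : E2) : Prop where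
  angle_mem : β ∈ Ioo π (2 * π)
  isOpen : IsOpen Ω
  isBounded : Bornology.IsBounded Ω
  frontier_subset : frontier Ω ⊆
    segment ℝ O A ∪ segment ℝ O B ∪ segment ℝ A C ∪ segment ℝ B C
  left_ne : A ≠ O
  right_ne : B ≠ O
  angle_eq : EuclideanGeometry.angle A O B = 2 * π - β
  exists_ball_inter_eq : ∃ ε > 0, Metric.ball O ε ∩ Ω = Metric.ball O ε \ wedge O A B

section NormalPosition

variable {κ : ℝ}

lemma arg_eq_of_coe_eq {z : ℂ} {θ : ℝ} (hθ : θ ∈ Ioc (-π) π) (h : (z.arg : Angle) = θ) :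
    z.arg = θ := by
  rw [← Complex.arg_coe_angle_toReal_eq_arg, h, Angle.toReal_coe_eq_self_iff_mem_Ioc.2 hθ]

lemma exists_rotation_arg_eq {P Q : ℂ} (hP : P ≠ 0) (hQ : Q ≠ 0) (hκ : κ ∈ Ioo 0 (π / 2))
    (hPQ : (Q / P).arg = π - 2 * κ) :
    ∃ a : Circle, (rotation a P).arg = π / 2 + κ ∧ (rotation a Q).arg = -(π / 2 + κ) := by
  obtain ⟨hκ0, hκ2⟩ := hκ
  let a := Angle.toCircle (π / 2 + κ - P.arg : ℝ)
  refine ⟨a, arg_eq_of_coe_eq ⟨by linarith, by linarith⟩ ?_,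
    arg_eq_of_coe_eq ⟨by linarith, by linarith⟩ ?_⟩
  · rw [rotation_apply, Complex.arg_mul_coe_angle a.coe_ne_zero hP, Angle.arg_toCircle,
      ← Angle.coe_add, sub_add_cancel]
  · have hPQ' : (Q.arg : Angle) = (P.arg + (π - 2 * κ) : ℝ) := by
      rw [Angle.coe_add, ← hPQ, Complex.arg_div_coe_angle hQ hP, add_sub_cancel]
    rw [rotation_apply, Complex.arg_mul_coe_angle a.coe_ne_zero hQ, Angle.arg_toCircle, hPQ',
      ← Angle.coe_add, Angle.angle_eq_iff_two_pi_dvd_sub]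
    exact ⟨1, by push_cast; ring⟩

lemma exists_linearIsometryEquiv_arg_eq {P Q : ℂ} (hP : P ≠ 0) (hQ : Q ≠ 0)
    (hκ : κ ∈ Ioo 0 (π / 2)) (hPQ : InnerProductGeometry.angle P Q = π - 2 * κ) :
    ∃ f : ℂ ≃ₗᵢ[ℝ] ℂ, (f P).arg = π / 2 + κ ∧ (f Q).arg = -(π / 2 + κ) := by
  rw [InnerProductGeometry.angle_comm, Complex.angle_eq_abs_arg hQ hP] at hPQ
  rcases abs_choice (Q / P).arg with h | h
  · obtain ⟨a, haP, haQ⟩ := exists_rotation_arg_eq hP hQ hκ (h ▸ hPQ)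
    exact ⟨rotation a, haP, haQ⟩
  · have hne : (Q / P).arg ≠ π := fun hπ => by
      rw [hπ, abs_of_pos pi_pos] at h
      linarith [pi_pos]
    have hconj : (starRingEnd ℂ Q / starRingEnd ℂ P).arg = π - 2 * κ := by
      rw [← map_div₀, Complex.arg_conj, if_neg hne, ← h, hPQ]
    obtain ⟨a, haP, haQ⟩ := exists_rotation_arg_eq ((map_ne_zero _).2 hP) ((map_ne_zero _).2 hQ)
      hκ hconj
    exact ⟨Complex.conjLIE.trans (rotation a), haP, haQ⟩

lemma exists_affineIsometryEquiv_arg_eq {O A B : E2} (hA : A ≠ O) (hB : B ≠ O)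
    (hκ : κ ∈ Ioo 0 (π / 2)) (hAB : EuclideanGeometry.angle A O B = π - 2 * κ) :
    ∃ φ : ℂ ≃ᵃⁱ[ℝ] E2, φ 0 = O ∧ (φ.symm A).arg = π / 2 + κ ∧
      (φ.symm B).arg = -(π / 2 + κ) := by
  let e : ℂ ≃ₗᵢ[ℝ] E2 := Complex.orthonormalBasisOneI.repr
  have hangle : InnerProductGeometry.angle (e.symm (A - O)) (e.symm (B - O)) = π - 2 * κ := by
    rw [← hAB]
    exact e.symm.toLinearIsometry.angle_map (A - O) (B - O)
  obtain ⟨f, hfA, hfB⟩ := exists_linearIsometryEquiv_arg_eq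
    ((map_ne_zero_iff _ e.symm.injective).2 (sub_ne_zero.2 hA))
    ((map_ne_zero_iff _ e.symm.injective).2 (sub_ne_zero.2 hB)) hκ hangle
  refine ⟨(f.symm.trans e).toAffineIsometryEquiv.trans (AffineIsometryEquiv.vaddConst ℝ O),
    ?_, hfA, hfB⟩
  simp

lemma map_mem_wedge_iff (φ : ℂ ≃ᵃⁱ[ℝ] E2) {z a b : ℂ} :
    φ z ∈ wedge (φ 0) (φ a) (φ b) ↔ ∃ s t : ℝ, 0 ≤ s ∧ 0 ≤ t ∧ z = s • a + t • b := by
  have hφ : ∀ w, φ w - φ 0 = φ.linearIsometryEquiv w := fun w => by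
    simpa using (φ.map_vsub w 0).symm
  have hcomb : ∀ s t : ℝ, φ 0 + s • (φ a - φ 0) + t • (φ b - φ 0) = φ (s • a + t • b) :=
    fun s t => by
      rw [hφ, hφ, add_assoc, ← map_smul, ← map_smul, ← map_add, ← hφ, add_sub_cancel]
  simp only [wedge, mem_ofPred_eq, hcomb, φ.injective.eq_iff]

variable {a b c : ℂ} {θ r : ℝ}

lemma re_add_smul_nonpos (hθ : cos θ < 0) (ha : a.arg = θ) (hb : b.arg = -θ) {s t : ℝ}
    (hs : 0 ≤ s) (ht : 0 ≤ t) : (s • a + t • b).re ≤ 0 := by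
  rw [Complex.add_re, Complex.smul_re, Complex.smul_re, ← Complex.norm_mul_cos_arg a,
    ← Complex.norm_mul_cos_arg b, ha, hb, cos_neg]
  exact add_nonpos
    (mul_nonpos_of_nonneg_of_nonpos hs (mul_nonpos_of_nonneg_of_nonpos (norm_nonneg a) hθ.le))
    (mul_nonpos_of_nonneg_of_nonpos ht (mul_nonpos_of_nonneg_of_nonpos (norm_nonneg b) hθ.le))

lemma exists_add_smul_eq_neg (hθ : cos θ < 0) (ha : a.arg = θ) (hb : b.arg = -θ) (hr : 0 ≤ r) :
    ∃ s t : ℝ, 0 ≤ s ∧ 0 ≤ t ∧ -(r : ℂ) = s • a + t • b := by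
  have hne : ∀ {z : ℂ}, cos z.arg < 0 → ‖z‖ ≠ 0 := fun {z} hz h0 => by
    rw [norm_eq_zero.1 h0, Complex.arg_zero, cos_zero] at hz
    exact hz.not_gt one_pos
  have ha0 : ‖a‖ ≠ 0 := hne (ha ▸ hθ)
  have hb0 : ‖b‖ ≠ 0 := hne (by rwa [hb, cos_neg])
  have hcos : 0 ≤ r / (2 * -cos θ) := div_nonneg hr (by linarith)
  refine ⟨r / (2 * -cos θ) / ‖a‖, r / (2 * -cos θ) / ‖b‖, by positivity, by positivity, ?_⟩
  have hθ0 : cos θ ≠ 0 := hθ.ne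
  apply Complex.ext
  · rw [Complex.add_re, Complex.smul_re, Complex.smul_re, ← Complex.norm_mul_cos_arg a,
      ← Complex.norm_mul_cos_arg b, ha, hb, cos_neg, Complex.neg_re, Complex.ofReal_re,
      smul_eq_mul, smul_eq_mul]
    field_simp
    ring
  · rw [Complex.add_im, Complex.smul_im, Complex.smul_im, ← Complex.norm_mul_sin_arg a,
      ← Complex.norm_mul_sin_arg b, ha, hb, sin_neg, Complex.neg_im, Complex.ofReal_im,
      smul_eq_mul, smul_eq_mul]
    field_simp
    ring

lemma IsReflexRegion.isNormalRegion_preimage (φ : ℂ ≃ᵃⁱ[ℝ] E2) {Ω : Set E2} {β : ℝ}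
    (hΩ : IsReflexRegion Ω β (φ 0) (φ a) (φ b) (φ c)) (ha : a.arg = π / 2 + (β - π) / 2)
    (hb : b.arg = -(π / 2 + (β - π) / 2)) : IsNormalRegion ((β - π) / 2) a b c (φ ⁻¹' Ω) := by
  obtain ⟨hβ, hβ2⟩ := hΩ.angle_mem
  obtain ⟨ε, hε, hcorner⟩ := hΩ.exists_ball_inter_eq
  have hmem : ∀ z : ℂ, ‖z‖ < ε → (φ z ∈ Ω ↔ φ z ∉ wedge (φ 0) (φ a) (φ b)) := fun z hz => by
    have hball : φ z ∈ Metric.ball (φ 0) ε := by simpa using hz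
    simpa [hball] using Set.ext_iff.1 hcorner (φ z)
  have hr : ‖((ε / 2 : ℝ) : ℂ)‖ < ε := by
    rw [Complex.norm_of_nonneg (half_pos hε).le]
    exact half_lt_self hε
  have hcos : cos (π / 2 + (β - π) / 2) < 0 :=
    cos_neg_of_pi_div_two_lt_of_lt (by linarith) (by linarith)
  have hsegment : ∀ x y, φ ⁻¹' segment ℝ (φ x) (φ y) = segment ℝ x y := fun x y => by
    rw [← preimage_image_eq (segment ℝ x y) φ.injective]
    exact congrArg _ (image_segment ℝ φ.toAffineEquiv.toAffineMap x y).symm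
  refine ⟨⟨by linarith, by linarith⟩, hΩ.isOpen.preimage φ.continuous,
    φ.antilipschitz.isBounded_preimage hΩ.isBounded, ?_, ha, hb,
    ⟨ε / 2, half_pos hε, (hmem _ hr).2 ?_⟩, ⟨ε / 2, half_pos hε, fun h => ?_⟩⟩
  · rw [← preimage_frontier_eq]
    simpa only [preimage_union, hsegment] using preimage_mono (f := φ) hΩ.frontier_subset
  · rw [map_mem_wedge_iff]
    rintro ⟨s, t, hs, ht, h⟩
    have hre := re_add_smul_nonpos hcos ha hb hs ht
    rw [← h, Complex.ofReal_re] at hre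
    exact hre.not_gt (half_pos hε)
  · exact (hmem _ ((norm_neg _).trans_lt hr)).1 h
      ((map_mem_wedge_iff φ).2 (exists_add_smul_eq_neg hcos ha hb (half_pos hε).le))

lemma IsReflexRegion.exists_isNormalRegion {Ω : Set E2} {β : ℝ} {O A B C : E2}
    (hΩ : IsReflexRegion Ω β O A B C) :
    ∃ (φ : ℂ ≃ᵃⁱ[ℝ] E2) (a b c : ℂ), IsNormalRegion ((β - π) / 2) a b c (φ ⁻¹' Ω) := by
  obtain ⟨hβ, hβ2⟩ := hΩ.angle_mem
  obtain ⟨φ, rfl, ha, hb⟩ := exists_affineIsometryEquiv_arg_eq hΩ.left_ne hΩ.right_ne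
    (κ := (β - π) / 2) ⟨by linarith, by linarith⟩ (hΩ.angle_eq.trans (by ring))
  obtain ⟨a, rfl⟩ := φ.surjective A
  obtain ⟨b, rfl⟩ := φ.surjective B
  obtain ⟨c, rfl⟩ := φ.surjective C
  rw [φ.symm_apply_apply] at ha hb
  exact ⟨φ, a, b, c, hΩ.isNormalRegion_preimage φ ha hb⟩

end NormalPosition

lemma _root_.IsNonconvexQuadrilateral.exists_isReflexRegion {Ω : Set E2} {β : ℝ}
    (hΩ : IsNonconvexQuadrilateral Ω β) : ∃ O A B C, IsReflexRegion Ω β O A B C := by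
  obtain ⟨hopen, hbdd, -, hβ, hβ2, v, hinj, hfrontier, -, -, i, ⟨hangle, hball⟩, -⟩ := hΩ
  refine ⟨v i, v (i - 1), v (i + 1), v (i + 2), ⟨hβ, hβ2⟩, hopen, hbdd, ?_,
    hinj.ne ((by decide : ∀ i : Fin 4, i - 1 ≠ i) i),
    hinj.ne ((by decide : ∀ i : Fin 4, i + 1 ≠ i) i), hangle, hball⟩
  rw [hfrontier, iUnion_subset_iff]
  have hindex : ∀ i j : Fin 4, j = i ∨ j = i + 1 ∨ j = i + 2 ∨ j = i - 1 := by decide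
  intro j
  rcases hindex i j with rfl | rfl | rfl | rfl
  · exact fun _ h => .inl (.inl (.inr h))
  · rw [(by decide : ∀ i : Fin 4, i + 1 + 1 = i + 2) i]
    exact subset_union_right
  · rw [segment_symm, (by decide : ∀ i : Fin 4, i + 2 + 1 = i - 1) i]
    exact fun _ h => .inl (.inr h)
  · rw [segment_symm, sub_add_cancel]
    exact fun _ h => .inl (.inl (.inl h))

end NonconvexQuadrilateral

open NonconvexQuadrilateral in
theorem hardy_inequality_nonconvex_quadrilateral_general {Ω : Set E2} {β βcr c : ℝ}
    {O A B C : E2} (hΩ : IsReflexRegion Ω β O A B C) (hβcr : isBetaCr βcr)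
    (hc : isHardyConst βcr β c) {u : E2 → ℝ} (hu : ContDiff ℝ 1 u) (hcs : HasCompactSupport u)
    (hsupp : tsupport u ⊆ Ω) :
    c * ∫ x in Ω, u x ^ 2 / Metric.infDist x (frontier Ω) ^ 2 ≤
      ∫ x in Ω, ‖gradient u x‖ ^ 2 := by
  obtain ⟨α, ⟨p⟩, hcα⟩ := exists_angularProfile hΩ.angle_mem.1 hΩ.angle_mem.2 hβcr hc
  obtain ⟨φ, _, _, _, hW⟩ := hΩ.exists_isNormalRegion
  have hsupp' : tsupport (u ∘ φ) ⊆ φ ⁻¹' Ω := by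
    have h : tsupport (u ∘ φ) = φ ⁻¹' tsupport u :=
      tsupport_comp_eq_preimage u φ.toHomeomorph
    rw [h]
    exact preimage_mono hsupp
  calc _ ≤ α * (1 - α) * ∫ x in Ω, u x ^ 2 / Metric.infDist x (frontier Ω) ^ 2 :=
        mul_le_mul_of_nonneg_right hcα (integral_nonneg fun x => by positivity)
    _ ≤ ∫ x in Ω, ‖gradient u x‖ ^ 2 := by
        rw [setIntegral_sq_div_infDist_sq_eq φ hsupp,
          setIntegral_norm_gradient_sq_eq φ (hu.differentiable one_ne_zero) hsupp]
        exact hW.hardy_inequality p ⟨by linarith [p.half_le], p.le_one⟩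
          (hu.comp φ.toAffineIsometry.toContinuousAffineMap.contDiff)
          (hcs.comp_homeomorph φ.toHomeomorph) hsupp'

/-- The Hardy inequality with constant `c_β` holds on any non-convex quadrilateral with
reflex interior angle `β`. -/
theorem hardy_inequality_nonconvex_quadrilateral
    (Ω : Set E2) (β βcr cβ : ℝ)
    (hΩ : IsNonconvexQuadrilateral Ω β)
    (hβcr : isBetaCr βcr)
    (hcβ : isHardyConst βcr β cβ)
    (u : E2 → ℝ) (hu : ContDiff ℝ (⊤ : ℕ∞) u) (hcs : HasCompactSupport u)
    (hsupp : tsupport u ⊆ Ω) :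
    cβ * ∫ x in Ω, (u x) ^ 2 / (Metric.infDist x (frontier Ω)) ^ 2 ≤
      ∫ x in Ω, ‖gradient u x‖ ^ 2 := by
  obtain ⟨O, A, B, C, hreflex⟩ := hΩ.exists_isReflexRegion
  exact hardy_inequality_nonconvex_quadrilateral_general hreflex hβcr hcβ
    (hu.of_le (by exact_mod_cast le_top)) hcs hsupp
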